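/- Let X be a cyclic finite-dimensional smooth T-module such that 𝔼[X] is perfect of degree one, let i : P → M and j : 𝔼[X] → M be injective TS-morphisms between TS-modules of finite length, and let p : M → Q = M/i(P) be the quotient map. Then either φ = p∘j is injective and i induces an injection of P into M/j(𝔼[X]), or there exists a T-morphism ψ : X → κ(Q) = Q^S and an injective TS-morphism 𝔼[Y] → P, where Y = ker(ψ). -/

import Mathlib

noncomputable section

open scoped Classical

namespace PSW

/-! ### The affine group `λ.b : x ↦ λ·x + b` over a field `K`. -/

@[ext]
structure Aff (K : Type*) [Field K] where
  t : Kˣ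
  s : K

namespace Aff

variable {K : Type*} [Field K]

instance : Mul (Aff K) := ⟨fun g h => ⟨g.t * h.t, g.s + (g.t : K) * h.s⟩⟩
instance : One (Aff K) := ⟨⟨1, 0⟩⟩
instance : Inv (Aff K) := ⟨fun g => ⟨g.t⁻¹, -(((g.t⁻¹ : Kˣ) : K) * g.s)⟩⟩

@[simp] lemma mul_t (g h : Aff K) : (g * h).t = g.t * h.t := rfl
@[simp] lemma mul_s (g h : Aff K) : (g * h).s = g.s + (g.t : K) * h.s := rfl
@[simp] lemma one_t : (1 : Aff K).t = 1 := rfl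
@[simp] lemma one_s : (1 : Aff K).s = 0 := rfl
@[simp] lemma inv_t (g : Aff K) : (g⁻¹).t = g.t⁻¹ := rfl
@[simp] lemma inv_s (g : Aff K) : (g⁻¹).s = -(((g.t⁻¹ : Kˣ) : K) * g.s) := rfl

instance : Group (Aff K) where
  mul_assoc a b c := by
    ext
    · simp [mul_assoc]
    · simp only [mul_s, mul_t, Units.val_mul]; ring
  one_mul a := by ext <;> simp
  mul_one a := by ext <;> simp
  inv_mul_cancel a := by
    ext
    · simp
    · simp

/-- The element `x_λ` of the group `TS`. -/
def xT (u : Kˣ) : Aff K := ⟨u, 0⟩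

/-- The element `s_b` of the group `TS`. -/
def sS (b : K) : Aff K := ⟨1, b⟩

@[simp] lemma xT_t (u : Kˣ) : (xT u : Aff K).t = u := rfl
@[simp] lemma xT_s (u : Kˣ) : (xT u : Aff K).s = 0 := rfl
@[simp] lemma sS_t (b : K) : (sS b : Aff K).t = 1 := rfl
@[simp] lemma sS_s (b : K) : (sS b : Aff K).s = b := rfl

/-- `T ≅ k^×` as a subgroup of `TS`. -/
def xTHom : Kˣ →* Aff K where
  toFun := xT
  map_one' := rfl
  map_mul' u v := by ext <;> simp [xT]

@[simp] lemma xTHom_apply (u : Kˣ) : (xTHom u : Aff K) = xT u := rfl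

lemma mul_sS (g : Aff K) (b : K) : g * sS b = sS ((g.t : K) * b) * g := by
  ext
  · simp
  · simp [add_comm]

lemma sS_mul (b : K) (g : Aff K) : sS b * g = g * sS (((g.t⁻¹ : Kˣ) : K) * b) := by
  ext
  · simp
  · simp [Units.mul_inv_cancel_left, add_comm]

lemma aff_decomp (g : Aff K) : g = xT g.t * sS (((g.t⁻¹ : Kˣ) : K) * g.s) := by
  ext
  · simp
  · simp [Units.mul_inv_cancel_left]

instance [TopologicalSpace K] : TopologicalSpace (Aff K) :=
  TopologicalSpace.induced (fun g : Aff K => ((g.t, g.s) : Kˣ × K)) inferInstance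

end Aff

/-! ### Generalities on representations of a monoid on complex vector spaces. -/

namespace GRep

variable {G : Type*} [Monoid G]

section MonoidModules

variable {V W : Type*} [AddCommMonoid V] [Module ℂ V] [AddCommMonoid W] [Module ℂ W]

/-- A submodule invariant under the representation. -/
def Invariant (ρ : Representation ℂ G V) (U : Submodule ℂ V) : Prop :=
  ∀ (g : G) (v : V), v ∈ U → ρ g v ∈ U

/-- Equivariance of a linear map with respect to two representations. -/
def Equivariant (ρ : Representation ℂ G V) (σ : Representation ℂ G W) (f : V →ₗ[ℂ] W) : Prop :=
  ∀ (g : G) (v : V), f (ρ g v) = σ g (f v)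

/-- Isomorphism of representations. -/
def Iso (ρ : Representation ℂ G V) (σ : Representation ℂ G W) : Prop :=
  ∃ e : V ≃ₗ[ℂ] W, ∀ (g : G) (v : V), e (ρ g v) = σ g (e v)

/-- Irreducibility. -/
def Irred (ρ : Representation ℂ G V) : Prop :=
  Nontrivial V ∧ ∀ U : Submodule ℂ V, Invariant ρ U → U = ⊥ ∨ U = ⊤

/-- Subrepresentation on an invariant submodule. -/
def sub (ρ : Representation ℂ G V) {U : Submodule ℂ V} (hU : Invariant ρ U) :
    Representation ℂ G ↥U where
  toFun g := (ρ g).restrict fun v hv => hU g v hv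
  map_one' := by
    apply LinearMap.ext; intro v; apply Subtype.ext
    simp [LinearMap.restrict_apply]
  map_mul' g h := by
    apply LinearMap.ext; intro v; apply Subtype.ext
    simp [LinearMap.restrict_apply]

@[simp] lemma sub_apply (ρ : Representation ℂ G V) {U : Submodule ℂ V} (hU : Invariant ρ U)
    (g : G) (v : ↥U) : ((sub ρ hU g v : ↥U) : V) = ρ g (v : V) := rfl

lemma ker_invariant (ρ : Representation ℂ G V) (σ : Representation ℂ G W)
    (f : V →ₗ[ℂ] W) (hf : Equivariant ρ σ f) : Invariant ρ (LinearMap.ker f) := by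
  intro g v hv
  rw [LinearMap.mem_ker] at hv ⊢
  rw [hf g v, hv, map_zero]

lemma range_invariant (ρ : Representation ℂ G V) (σ : Representation ℂ G W)
    (f : V →ₗ[ℂ] W) (hf : Equivariant ρ σ f) : Invariant σ (LinearMap.range f) := by
  rintro g w ⟨v, rfl⟩
  exact ⟨ρ g v, hf g v⟩

lemma map_invariant (ρ : Representation ℂ G V) (σ : Representation ℂ G W)
    (f : V →ₗ[ℂ] W) (hf : Equivariant ρ σ f) (U : Submodule ℂ V) (hU : Invariant ρ U) :
    Invariant σ (U.map f) := by
  rintro g w ⟨v, hv, rfl⟩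
  exact ⟨ρ g v, hU g v hv, hf g v⟩

end MonoidModules

section GroupModules

variable {V W : Type*} [AddCommGroup V] [Module ℂ V] [AddCommGroup W] [Module ℂ W]

/-- Quotient representation. -/
def quot (ρ : Representation ℂ G V) (U : Submodule ℂ V) (hU : Invariant ρ U) :
    Representation ℂ G (V ⧸ U) where
  toFun g := U.mapQ U (ρ g) fun v hv => hU g v hv
  map_one' := by
    apply LinearMap.ext; intro x
    obtain ⟨v, rfl⟩ := Submodule.Quotient.mk_surjective U x
    simp [Submodule.mapQ_apply]
  map_mul' g h := by
    apply LinearMap.ext; intro x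
    obtain ⟨v, rfl⟩ := Submodule.Quotient.mk_surjective U x
    simp [Submodule.mapQ_apply]

@[simp] lemma quot_apply (ρ : Representation ℂ G V) (U : Submodule ℂ V) (hU : Invariant ρ U)
    (g : G) (v : V) :
    quot ρ U hU g (Submodule.Quotient.mk v) = Submodule.Quotient.mk (ρ g v) := rfl

/-- Subquotient representation on `B/A`. -/
def subquot (ρ : Representation ℂ G V) {A B : Submodule ℂ V}
    (hA : Invariant ρ A) (hB : Invariant ρ B) :
    Representation ℂ G (↥B ⧸ A.comap B.subtype) :=
  quot (sub ρ hB) (A.comap B.subtype) fun g v hv => hA g v.1 hv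

lemma mkQ_equivariant (ρ : Representation ℂ G V) (U : Submodule ℂ V) (hU : Invariant ρ U) :
    Equivariant ρ (quot ρ U hU) U.mkQ := by
  intro g v
  show Submodule.Quotient.mk (ρ g v) = quot ρ U hU g (Submodule.Quotient.mk v)
  rw [quot_apply]

end GroupModules

end GRep

/-! ### TS-modules: representations of the affine group. -/

/-- A `TS`-module structure on `V` is a representation of the group `TS ≅ Gl_a(1)`. -/
abbrev Rep (K : Type*) [Field K] (V : Type*) [AddCommGroup V] [Module ℂ V] :=
  Representation ℂ (Aff K) V

section RepDefs

open Aff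

variable {K : Type*} [Field K]
variable {V W : Type*} [AddCommGroup V] [Module ℂ V] [AddCommGroup W] [Module ℂ W]

/-- Smoothness: every vector has open stabilizer. -/
def IsSmoothRep [TopologicalSpace K] (ρ : Rep K V) : Prop :=
  ∀ v : V, IsOpen {g : Aff K | ρ g v = v}

/-- Smoothness of a `T`-module, i.e. of a representation of `T ≅ k^×`. -/
def TIsSmooth {X : Type*} [AddCommMonoid X] [Module ℂ X] [TopologicalSpace K]
    (τ : Representation ℂ Kˣ X) : Prop :=
  ∀ x : X, IsOpen {u : Kˣ | τ u x = x}

/-- Smooth character of `T ≅ k^×` (open kernel, equivalently locally constant). -/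
def SmoothMulChar [TopologicalSpace K] (χ : Kˣ →* ℂˣ) : Prop :=
  IsOpen {u : Kˣ | χ u = 1}

/-- The space `V^S` of `S`-invariants. -/
def sInv (ρ : Rep K V) : Submodule ℂ V where
  carrier := {v | ∀ b : K, ρ (sS b) v = v}
  zero_mem' := fun b => map_zero _
  add_mem' {a b} ha hb := fun c => by rw [map_add, ha c, hb c]
  smul_mem' c v hv := fun b => by rw [map_smul, hv b]

@[simp] lemma mem_sInv (ρ : Rep K V) (v : V) :
    v ∈ sInv ρ ↔ ∀ b : K, ρ (sS b) v = v := Iff.rfl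

/-- The `χ`-eigenspace `X^{T,χ}` of a `T`-module. -/
def tEigenT {X : Type*} [AddCommMonoid X] [Module ℂ X]
    (τ : Representation ℂ Kˣ X) (χ : Kˣ →* ℂˣ) : Submodule ℂ X where
  carrier := {x | ∀ u : Kˣ, τ u x = (χ u : ℂ) • x}
  zero_mem' := fun u => by simp
  add_mem' {a b} ha hb := fun u => by rw [map_add, ha u, hb u, smul_add]
  smul_mem' c x hx := fun u => by rw [map_smul, hx u]; exact smul_comm c ((χ u : ℂ)) x

@[simp] lemma mem_tEigenT {X : Type*} [AddCommMonoid X] [Module ℂ X]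
    (τ : Representation ℂ Kˣ X) (χ : Kˣ →* ℂˣ) (x : X) :
    x ∈ tEigenT τ χ ↔ ∀ u : Kˣ, τ u x = (χ u : ℂ) • x := Iff.rfl

/-- The `χ`-eigenspace `V^{T,χ}` of a `TS`-module. -/
def tEigen (ρ : Rep K V) (χ : Kˣ →* ℂˣ) : Submodule ℂ V := tEigenT (ρ.comp xTHom) χ

/-- The kernel of the projection to the `S`-coinvariants `V_S`. -/
def sCoinvKer (ρ : Rep K V) : Submodule ℂ V :=
  Submodule.span ℂ {w : V | ∃ (b : K) (v : V), w = ρ (sS b) v - v}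

/-- The kernel of the projection to the twisted coinvariants `V_{S,ψ'}`. -/
def sTwistKer (ρ : Rep K V) (ψ' : AddChar K ℂ) : Submodule ℂ V :=
  Submodule.span ℂ {w : V | ∃ (b : K) (v : V), w = ρ (sS b) v - ψ' b • v}

/-- The kernel of the projection to the `χ`-coinvariants `X_{T,χ}` of a `T`-module. -/
def tTwistKerT {X : Type*} [AddCommGroup X] [Module ℂ X]
    (τ : Representation ℂ Kˣ X) (χ : Kˣ →* ℂˣ) : Submodule ℂ X :=
  Submodule.span ℂ {w : X | ∃ (u : Kˣ) (x : X), w = τ u x - (χ u : ℂ) • x}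

/-- The kernel of the projection to the `χ`-coinvariants `V_{T,χ}` of a `TS`-module. -/
def tTwistKer (ρ : Rep K V) (χ : Kˣ →* ℂˣ) : Submodule ℂ V := tTwistKerT (ρ.comp xTHom) χ

lemma sCoinvKer_invariant (ρ : Rep K V) : GRep.Invariant ρ (sCoinvKer ρ) := by
  intro g v hv
  have h : sCoinvKer ρ ≤ Submodule.comap (ρ g) (sCoinvKer ρ) := by
    refine Submodule.span_le.2 ?_
    rintro w ⟨b, v', rfl⟩
    simp only [SetLike.mem_coe, Submodule.mem_comap, map_sub]
    have h1 : ρ g (ρ (sS b) v') = ρ (sS ((g.t : K) * b)) (ρ g v') := by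
      rw [← Module.End.mul_apply, ← map_mul, mul_sS, map_mul, Module.End.mul_apply]
    rw [h1]
    exact Submodule.subset_span ⟨(g.t : K) * b, ρ g v', rfl⟩
  exact h hv

lemma sInv_invariant (ρ : Rep K V) : GRep.Invariant ρ (sInv ρ) := by
  intro g v hv
  rw [mem_sInv] at hv ⊢
  intro b
  have h1 : ρ (sS b) (ρ g v) = ρ g (ρ (sS (((g.t⁻¹ : Kˣ) : K) * b)) v) := by
    rw [← Module.End.mul_apply, ← map_mul, sS_mul, map_mul, Module.End.mul_apply]
  rw [h1, hv _]

/-- The `S`-coinvariants `π₀(V) = V_S` as a `TS`-module (`S` acting trivially). -/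
def piZeroRep (ρ : Rep K V) : Rep K (V ⧸ sCoinvKer ρ) :=
  GRep.quot ρ (sCoinvKer ρ) (sCoinvKer_invariant ρ)

/-- The `S`-coinvariants `π₀(V) = V_S` as a `T`-module. -/
def piZeroT (ρ : Rep K V) : Representation ℂ Kˣ (V ⧸ sCoinvKer ρ) :=
  (piZeroRep ρ).comp xTHom

/-- The `T`-module structure on `κ(V) = V^S`. -/
def sInvT (ρ : Rep K V) : Representation ℂ Kˣ ↥(sInv ρ) :=
  (GRep.sub ρ (sInv_invariant ρ)).comp xTHom

/-- A `TS`-module is perfect if all its eigenspaces `V^{T,χ}` for smooth `χ` vanish. -/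
def Perfect [TopologicalSpace K] (ρ : Rep K V) : Prop :=
  ∀ χ : Kˣ →* ℂˣ, SmoothMulChar χ → tEigen ρ χ = ⊥

/-- A finite-dimensional `T`-module is cyclic if each generalized eigenspace is a single
Jordan block; equivalently all eigenspaces `X^{T,χ}` have dimension at most one. -/
def TCyclic {X : Type*} [AddCommGroup X] [Module ℂ X]
    (τ : Representation ℂ Kˣ X) : Prop :=
  ∀ χ : Kˣ →* ℂˣ, Module.finrank ℂ ↥(tEigenT τ χ) ≤ 1

lemma sCoinvKer_le_comap (ρ : Rep K V) (σ : Rep K W)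
    (f : V →ₗ[ℂ] W) (hf : GRep.Equivariant ρ σ f) :
    sCoinvKer ρ ≤ (sCoinvKer σ).comap f := by
  refine Submodule.span_le.2 ?_
  rintro w ⟨b, v, rfl⟩
  simp only [SetLike.mem_coe, Submodule.mem_comap, map_sub]
  rw [hf]
  exact Submodule.subset_span ⟨b, f v, rfl⟩

/-- The map induced by an equivariant map on the `S`-coinvariants `π₀`. -/
def piZeroMap (ρ : Rep K V) (σ : Rep K W) (f : V →ₗ[ℂ] W) (hf : GRep.Equivariant ρ σ f) :
    (V ⧸ sCoinvKer ρ) →ₗ[ℂ] (W ⧸ sCoinvKer σ) :=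
  Submodule.mapQ _ _ f (sCoinvKer_le_comap ρ σ f hf)

lemma piZeroMap_equivariant (ρ : Rep K V) (σ : Rep K W) (f : V →ₗ[ℂ] W)
    (hf : GRep.Equivariant ρ σ f) :
    GRep.Equivariant (piZeroRep ρ) (piZeroRep σ) (piZeroMap ρ σ f hf) := by
  intro g x
  obtain ⟨v, rfl⟩ := Submodule.Quotient.mk_surjective _ x
  show piZeroMap ρ σ f hf (piZeroRep ρ g (Submodule.Quotient.mk v))
      = piZeroRep σ g (piZeroMap ρ σ f hf (Submodule.Quotient.mk v))
  rw [show piZeroRep ρ g (Submodule.Quotient.mk v) = Submodule.Quotient.mk (ρ g v) from rfl]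
  rw [show piZeroMap ρ σ f hf (Submodule.Quotient.mk v) = Submodule.Quotient.mk (f v) from rfl]
  rw [show piZeroMap ρ σ f hf (Submodule.Quotient.mk (ρ g v))
      = Submodule.Quotient.mk (f (ρ g v)) from rfl]
  rw [show piZeroRep σ g (Submodule.Quotient.mk (f v)) = Submodule.Quotient.mk (σ g (f v)) from rfl]
  rw [hf]

lemma kappaImg_invariant (ρ : Rep K V) :
    GRep.Invariant (piZeroT ρ) ((sInv ρ).map (sCoinvKer ρ).mkQ) := by
  rintro u w ⟨v, hv, rfl⟩
  refine ⟨ρ (xT u) v, sInv_invariant ρ (xT u) v hv, ?_⟩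
  rfl

end RepDefs

/-! ### Composition series and degree. -/

/-- A composition series for a `TS`-module, witnessing finite length: a maximal chain of
invariant submodules (the subquotients are then irreducible). -/
structure CompSeries {K : Type*} [Field K] {V : Type*} [AddCommGroup V] [Module ℂ V]
    (ρ : Rep K V) where
  n : ℕ
  W : ℕ → Submodule ℂ V
  bot : W 0 = ⊥
  top : W n = ⊤
  inv : ∀ i, GRep.Invariant ρ (W i)
  lt : ∀ i < n, W i < W (i + 1)
  maximal : ∀ i < n, ∀ C : Submodule ℂ V, GRep.Invariant ρ C → W i ≤ C → C ≤ W (i + 1) →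
    C = W i ∨ C = W (i + 1)

/-- The number of Jordan–Hölder constituents of a composition series isomorphic to a given
representation `σ` (applied with `σ = 𝕊`, this is the degree). -/
def CompSeries.deg {K : Type*} [Field K] {V : Type*} [AddCommGroup V] [Module ℂ V]
    {ρ : Rep K V} (c : CompSeries ρ) {W₀ : Type*} [AddCommMonoid W₀] [Module ℂ W₀]
    (σ : Representation ℂ (Aff K) W₀) : ℕ :=
  (Finset.univ.filter fun i : Fin c.n =>
    GRep.Iso (GRep.subquot ρ (c.inv i.1) (c.inv (i.1 + 1))) σ).card

/-! ### Fiber products of a `T`-module with a `TS`-module over a `T`-module. -/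

section Fiber

open Aff

variable {K : Type*} [Field K]
variable {X Y E : Type*} [AddCommGroup X] [Module ℂ X] [AddCommGroup Y] [Module ℂ Y]
  [AddCommGroup E] [Module ℂ E]

/-- The product `TS`-module `X × E` where `S` acts trivially on the `T`-module `X`. -/
def prodRepTE (τ : Representation ℂ Kˣ X) (ρ : Rep K E) : Rep K (X × E) where
  toFun g := (τ g.t).prodMap (ρ g)
  map_one' := by
    apply LinearMap.ext; rintro ⟨x, v⟩
    simp
  map_mul' g h := by
    apply LinearMap.ext; rintro ⟨x, v⟩
    simp [map_mul]

/-- The underlying space of the fiber product `𝔼[f] = X ×_Y E`. -/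
def fiberKer (f : X →ₗ[ℂ] Y) (q : E →ₗ[ℂ] Y) : Submodule ℂ (X × E) :=
  LinearMap.ker (f.comp (LinearMap.fst ℂ X E) - q.comp (LinearMap.snd ℂ X E))

lemma mem_fiberKer (f : X →ₗ[ℂ] Y) (q : E →ₗ[ℂ] Y) (p : X × E) :
    p ∈ fiberKer f q ↔ f p.1 = q p.2 := by
  simp [fiberKer, sub_eq_zero]

lemma fiber_invariant (τX : Representation ℂ Kˣ X) (ρE : Rep K E)
    (τY : Representation ℂ Kˣ Y) (f : X →ₗ[ℂ] Y) (q : E →ₗ[ℂ] Y)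
    (hf : ∀ (u : Kˣ) (x : X), f (τX u x) = τY u (f x))
    (hq : sCoinvKer ρE ≤ LinearMap.ker q)
    (hqT : ∀ (u : Kˣ) (v : E), q (ρE (xT u) v) = τY u (q v)) :
    GRep.Invariant (prodRepTE τX ρE) (fiberKer f q) := by
  intro g p hp
  rw [mem_fiberKer] at hp ⊢
  have hsb : q (ρE (sS (((g.t⁻¹ : Kˣ) : K) * g.s)) p.2) = q p.2 := by
    have h1 : ρE (sS (((g.t⁻¹ : Kˣ) : K) * g.s)) p.2 - p.2 ∈ sCoinvKer ρE :=
      Submodule.subset_span ⟨_, _, rfl⟩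
    have h2 := hq h1
    rw [LinearMap.mem_ker, map_sub, sub_eq_zero] at h2
    exact h2
  have hdecomp : ρE g p.2 = ρE (xT g.t) (ρE (sS (((g.t⁻¹ : Kˣ) : K) * g.s)) p.2) := by
    conv_lhs => rw [aff_decomp g]
    rw [map_mul, Module.End.mul_apply]
  have h1 : ((prodRepTE τX ρE) g p).1 = τX g.t p.1 := rfl
  have h2 : ((prodRepTE τX ρE) g p).2 = ρE g p.2 := rfl
  rw [h1, h2, hf, hp, hdecomp, hqT, hsb]

end Fiber

/-! ### Jordan blocks of finite-dimensional `T`-modules. -/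

section Jordan

variable {K : Type*} [Field K]
variable {X : Type*} [AddCommGroup X] [Module ℂ X]

/-- A Jordan block of a `T`-module: a nonzero indecomposable invariant direct summand. -/
def IsJordanBlock (τ : Representation ℂ Kˣ X) (J : Submodule ℂ X) : Prop :=
  J ≠ ⊥ ∧ GRep.Invariant τ J ∧ (∃ C : Submodule ℂ X, GRep.Invariant τ C ∧ IsCompl J C) ∧
    ∀ A B : Submodule ℂ X, GRep.Invariant τ A → GRep.Invariant τ B → A ≤ J → B ≤ J →
      A ⊓ B = ⊥ → A ⊔ B = J → A = ⊥ ∨ B = ⊥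

end Jordan

/-! ### Invariants and coinvariants for a normal subgroup of an arbitrary group. -/

section Grp

variable {Γ : Type*} [Group Γ]
variable {V W : Type*} [AddCommGroup V] [Module ℂ V] [AddCommGroup W] [Module ℂ W]

/-- Invariants `V^N` under a subgroup `N`. -/
def grpInv (ρ : Representation ℂ Γ V) (N : Subgroup Γ) : Submodule ℂ V where
  carrier := {v | ∀ n ∈ N, ρ n v = v}
  zero_mem' := fun n _ => map_zero _
  add_mem' {a b} ha hb := fun n hn => by rw [map_add, ha n hn, hb n hn]
  smul_mem' c v hv := fun n hn => by rw [map_smul, hv n hn]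

@[simp] lemma mem_grpInv (ρ : Representation ℂ Γ V) (N : Subgroup Γ) (v : V) :
    v ∈ grpInv ρ N ↔ ∀ n ∈ N, ρ n v = v := Iff.rfl

/-- The kernel of the projection to the coinvariants `V_N` under a subgroup `N`. -/
def grpCoinvKer (ρ : Representation ℂ Γ V) (N : Subgroup Γ) : Submodule ℂ V :=
  Submodule.span ℂ {w : V | ∃ n ∈ N, ∃ v : V, w = ρ n v - v}

lemma grpInv_invariant (ρ : Representation ℂ Γ V) (N : Subgroup Γ) [hN : N.Normal] :
    GRep.Invariant ρ (grpInv ρ N) := by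
  intro γ v hv
  rw [mem_grpInv] at hv ⊢
  intro n hn
  have hmem : γ⁻¹ * n * γ ∈ N := by
    have := hN.conj_mem n hn γ⁻¹
    simpa using this
  have key : ρ n (ρ γ v) = ρ γ (ρ (γ⁻¹ * n * γ) v) := by
    rw [← Module.End.mul_apply, ← map_mul, ← Module.End.mul_apply, ← map_mul]
    congr 1
    group
  rw [key, hv _ hmem]

lemma grpCoinvKer_invariant (ρ : Representation ℂ Γ V) (N : Subgroup Γ) [hN : N.Normal] :
    GRep.Invariant ρ (grpCoinvKer ρ N) := by
  intro γ v hv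
  have h : grpCoinvKer ρ N ≤ Submodule.comap (ρ γ) (grpCoinvKer ρ N) := by
    refine Submodule.span_le.2 ?_
    rintro w ⟨n, hn, v', rfl⟩
    simp only [SetLike.mem_coe, Submodule.mem_comap, map_sub]
    have key : ρ γ (ρ n v') = ρ (γ * n * γ⁻¹) (ρ γ v') := by
      rw [← Module.End.mul_apply, ← map_mul, ← Module.End.mul_apply, ← map_mul]
      congr 1
      group
    rw [key]
    exact Submodule.subset_span ⟨γ * n * γ⁻¹, hN.conj_mem n hn γ, ρ γ v', rfl⟩
  exact h hv

/-- The map induced on `N`-invariants by an equivariant map. -/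
def grpInvRestrict (ρ : Representation ℂ Γ V) (σ : Representation ℂ Γ W) (N : Subgroup Γ)
    (f : V →ₗ[ℂ] W) (hf : GRep.Equivariant ρ σ f) : ↥(grpInv ρ N) →ₗ[ℂ] ↥(grpInv σ N) :=
  f.restrict (fun v hv => by
    rw [mem_grpInv] at hv ⊢
    intro n hn
    rw [← hf n v, hv n hn])

lemma grpCoinvKer_le_comap (ρ : Representation ℂ Γ V) (σ : Representation ℂ Γ W) (N : Subgroup Γ)
    (f : V →ₗ[ℂ] W) (hf : GRep.Equivariant ρ σ f) :
    grpCoinvKer ρ N ≤ (grpCoinvKer σ N).comap f := by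
  refine Submodule.span_le.2 ?_
  rintro w ⟨n, hn, v, rfl⟩
  simp only [SetLike.mem_coe, Submodule.mem_comap, map_sub]
  rw [hf]
  exact Submodule.subset_span ⟨n, hn, f v, rfl⟩

/-- The map induced on `N`-coinvariants by an equivariant map. -/
def grpCoinvMap (ρ : Representation ℂ Γ V) (σ : Representation ℂ Γ W) (N : Subgroup Γ)
    (f : V →ₗ[ℂ] W) (hf : GRep.Equivariant ρ σ f) :
    (V ⧸ grpCoinvKer ρ N) →ₗ[ℂ] (W ⧸ grpCoinvKer σ N) :=
  Submodule.mapQ _ _ f (grpCoinvKer_le_comap ρ σ N f hf)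

end Grp

/-! ### Tate L-factors of finite-dimensional `T`-modules. -/

section Lfactor

variable {K : Type*} [NontriviallyNormedField K]
variable {X : Type*} [AddCommGroup X] [Module ℂ X]

/-- The part of a `T`-module where the `χ`-twisted action is unramified
(trivial on the norm-one units). -/
def unrPart (τ : Representation ℂ Kˣ X) (χ : Kˣ →* ℂˣ) : Submodule ℂ X where
  carrier := {x | ∀ u : Kˣ, ‖(u : K)‖ = 1 → (χ u : ℂ) • τ u x = x}
  zero_mem' := fun u _ => by simp
  add_mem' {a b} ha hb := fun u hu => by rw [map_add, smul_add, ha u hu, hb u hu]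
  smul_mem' c x hx := fun u hu => by
    rw [map_smul, smul_comm, hx u hu]

lemma unrPart_stable (τ : Representation ℂ Kˣ X) (χ : Kˣ →* ℂˣ) (ϖ : Kˣ) :
    ∀ x ∈ unrPart τ χ, ((χ ϖ : ℂ) • τ ϖ) x ∈ unrPart τ χ := by
  intro x hx u hu
  have comm : τ u (τ ϖ x) = τ ϖ (τ u x) := by
    rw [← Module.End.mul_apply, ← map_mul, mul_comm, map_mul, Module.End.mul_apply]
  calc (χ u : ℂ) • τ u (((χ ϖ : ℂ) • τ ϖ) x)
      = (χ ϖ : ℂ) • ((χ u : ℂ) • τ u (τ ϖ x)) := by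
        rw [LinearMap.smul_apply, map_smul, smul_comm]
    _ = (χ ϖ : ℂ) • τ ϖ ((χ u : ℂ) • τ u x) := by rw [comm, map_smul]
    _ = ((χ ϖ : ℂ) • τ ϖ) x := by rw [hx u hu, LinearMap.smul_apply]

/-- The twisted uniformizer action on the unramified part. -/
def twistOp (τ : Representation ℂ Kˣ X) (χ : Kˣ →* ℂˣ) (ϖ : Kˣ) :
    ↥(unrPart τ χ) →ₗ[ℂ] ↥(unrPart τ χ) :=
  LinearMap.restrict ((χ ϖ : ℂ) • τ ϖ) (unrPart_stable τ χ ϖ)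

/-- The Tate `L`-factor `L(s, χ ⊗ X) = det(1 - q^{-s}·(χ·τ)(ϖ) | X^{unr,χ})⁻¹` of a
(finite-dimensional) `T`-module `X`, relative to a uniformizer `ϖ`. -/
def Lfactor (τ : Representation ℂ Kˣ X) (χ : Kˣ →* ℂˣ) (ϖ : Kˣ) (s : ℂ) : ℂ :=
  (LinearMap.det (LinearMap.id - (‖(ϖ : K)‖ : ℂ) ^ s • twistOp τ χ ϖ))⁻¹

end Lfactor

/-! ### The concrete `TS`-modules `𝕊`, `C_c^∞(k)`, `C_b^∞(k^×)` and `𝔼[χ]`. -/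

section Concrete

open Aff

variable (K : Type*) [NontriviallyNormedField K]

/-- The representation of `TS` on functions on `k^×`:
`(s_b g)(x) = ψ(bx) g(x)`, `(x_λ g)(x) = g(xλ)`. -/
def repCx (ψ : AddChar K ℂ) : Rep K (Kˣ → ℂ) where
  toFun g :=
    { toFun := fun f x => ψ (g.s * (x : K)) * f (x * g.t)
      map_add' := fun f₁ f₂ => by funext x; simp [mul_add]
      map_smul' := fun c f => by
        funext x
        simp only [Pi.smul_apply, smul_eq_mul, RingHom.id_apply]
        ring }
  map_one' := by
    apply LinearMap.ext; intro f; funext x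
    simp
  map_mul' g h := by
    apply LinearMap.ext; intro f; funext x
    show ψ ((g.s + (g.t : K) * h.s) * (x : K)) * f (x * (g.t * h.t))
        = ψ (g.s * (x : K)) * (ψ (h.s * ((x * g.t : Kˣ) : K)) * f (x * g.t * h.t))
    have harg : (g.s + (g.t : K) * h.s) * (x : K)
        = g.s * (x : K) + h.s * ((x * g.t : Kˣ) : K) := by
      push_cast
      ring
    rw [harg, AddChar.map_add_eq_mul, ← mul_assoc x g.t h.t]
    ring

@[simp] lemma repCx_apply (ψ : AddChar K ℂ) (g : Aff K) (f : Kˣ → ℂ) (x : Kˣ) :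
    repCx K ψ g f x = ψ (g.s * (x : K)) * f (x * g.t) := rfl

/-- The `χ`-twisted representation of `TS` on functions on `k`:
`(s_b g)(x) = ψ(bx) g(x)`, `(x_λ g)(x) = χ(λ) g(xλ)`.  (Take `χ = 1` for the
untwisted action on `C_c^∞(k)`; the module `𝔼[χ]` is `C_c^∞(k)` with the twisted action.) -/
def repCc (ψ : AddChar K ℂ) (χ : Kˣ →* ℂˣ) : Rep K (K → ℂ) where
  toFun g :=
    { toFun := fun f x => (χ g.t : ℂ) * ψ (g.s * x) * f (x * (g.t : K))
      map_add' := fun f₁ f₂ => by funext x; simp [mul_add]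
      map_smul' := fun c f => by
        funext x
        simp only [Pi.smul_apply, smul_eq_mul, RingHom.id_apply]
        ring }
  map_one' := by
    apply LinearMap.ext; intro f; funext x
    simp
  map_mul' g h := by
    apply LinearMap.ext; intro f; funext x
    show (χ (g.t * h.t) : ℂ) * ψ ((g.s + (g.t : K) * h.s) * x) * f (x * ((g.t * h.t : Kˣ) : K))
        = (χ g.t : ℂ) * ψ (g.s * x) * ((χ h.t : ℂ) * ψ (h.s * (x * (g.t : K)))
            * f (x * (g.t : K) * (h.t : K)))
    have harg : (g.s + (g.t : K) * h.s) * x = g.s * x + h.s * (x * (g.t : K)) := by ring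
    have harg2 : x * ((g.t * h.t : Kˣ) : K) = x * (g.t : K) * (h.t : K) := by
      push_cast
      ring
    rw [harg, harg2, AddChar.map_add_eq_mul, map_mul]
    push_cast
    ring

@[simp] lemma repCc_apply (ψ : AddChar K ℂ) (χ : Kˣ →* ℂˣ) (g : Aff K) (f : K → ℂ) (x : K) :
    repCc K ψ χ g f x = (χ g.t : ℂ) * ψ (g.s * x) * f (x * (g.t : K)) := rfl

/-- The one-dimensional `TS`-module `ℂ_χ` on which `S` acts trivially and `x_λ` by `χ(λ)`. -/
def chiRep (χ : Kˣ →* ℂˣ) : Rep K ℂ where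
  toFun g := (χ g.t : ℂ) • LinearMap.id
  map_one' := by
    apply LinearMap.ext; intro c
    simp
  map_mul' g h := by
    apply LinearMap.ext; intro c
    simp only [mul_t, map_mul, LinearMap.smul_apply, LinearMap.id_apply, Module.End.mul_apply,
      Units.val_mul, smul_eq_mul]
    ring

/-- `C_c^∞(k)`: locally constant, compactly supported functions on `k`. -/
def CcK : Submodule ℂ (K → ℂ) where
  carrier := {f | IsLocallyConstant f ∧ HasCompactSupport f}
  zero_mem' := ⟨IsLocallyConstant.const 0, by
    rw [hasCompactSupport_def]
    simp⟩
  add_mem' {a b} ha hb := ⟨ha.1.comp₂ hb.1 (· + ·), ha.2.add hb.2⟩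
  smul_mem' c f hf := by
    refine ⟨?_, hf.2.mono (Function.support_const_smul_subset c f)⟩
    exact hf.1.comp (fun z => c * z)

@[simp] lemma mem_CcK (f : K → ℂ) :
    f ∈ CcK K ↔ IsLocallyConstant f ∧ HasCompactSupport f := Iff.rfl

/-- `𝕊 = C_c^∞(k^×)`: locally constant, compactly supported functions on `k^×`. -/
def SSx : Submodule ℂ (Kˣ → ℂ) where
  carrier := {f | IsLocallyConstant f ∧ HasCompactSupport f}
  zero_mem' := ⟨IsLocallyConstant.const 0, by
    rw [hasCompactSupport_def]
    simp⟩
  add_mem' {a b} ha hb := ⟨ha.1.comp₂ hb.1 (· + ·), ha.2.add hb.2⟩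
  smul_mem' c f hf := by
    refine ⟨?_, hf.2.mono (Function.support_const_smul_subset c f)⟩
    exact hf.1.comp (fun z => c * z)

@[simp] lemma mem_SSx (f : Kˣ → ℂ) :
    f ∈ SSx K ↔ IsLocallyConstant f ∧ HasCompactSupport f := Iff.rfl

/-- `C_b^∞(k^×)`: locally constant functions on `k^×` whose support has compact closure
in `k`. -/
def Cb : Submodule ℂ (Kˣ → ℂ) where
  carrier := {f | IsLocallyConstant f ∧
    IsCompact (closure (((↑) : Kˣ → K) '' Function.support f))}
  zero_mem' := ⟨IsLocallyConstant.const 0, by simp⟩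
  add_mem' {a b} ha hb := by
    refine ⟨ha.1.comp₂ hb.1 (· + ·), ?_⟩
    refine IsCompact.of_isClosed_subset (ha.2.union hb.2) isClosed_closure ?_
    refine closure_minimal ?_ (ha.2.isClosed.union hb.2.isClosed)
    refine (Set.image_mono (Function.support_add _ _)).trans ?_
    rw [Set.image_union]
    exact Set.union_subset_union subset_closure subset_closure
  smul_mem' c f hf := by
    refine ⟨hf.1.comp (fun z => c * z), ?_⟩
    refine IsCompact.of_isClosed_subset hf.2 isClosed_closure ?_
    refine closure_mono ?_
    exact Set.image_mono (Function.support_const_smul_subset c f)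

@[simp] lemma mem_Cb (f : Kˣ → ℂ) :
    f ∈ Cb K ↔ IsLocallyConstant f ∧
      IsCompact (closure (((↑) : Kˣ → K) '' Function.support f)) := Iff.rfl

variable {K}

lemma SSx_invariant (ψ : AddChar K ℂ) (hψlc : IsLocallyConstant (⇑ψ)) :
    GRep.Invariant (repCx K ψ) (SSx K) := by
  rintro g f hf
  rw [mem_SSx] at hf ⊢
  obtain ⟨hlc, hcs⟩ := hf
  have heq : repCx K ψ g f
      = (fun x : Kˣ => ψ (g.s * (x : K))) * (f ∘ (Homeomorph.mulRight g.t)) := rfl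
  constructor
  · rw [heq]
    refine IsLocallyConstant.mul ?_ ?_
    · exact hψlc.comp_continuous (continuous_const.mul Units.continuous_val)
    · exact hlc.comp_continuous (Homeomorph.mulRight g.t).continuous
  · rw [heq]
    exact (hcs.comp_homeomorph (Homeomorph.mulRight g.t)).mul_left

lemma CcK_invariant (ψ : AddChar K ℂ) (hψlc : IsLocallyConstant (⇑ψ)) (χ : Kˣ →* ℂˣ) :
    GRep.Invariant (repCc K ψ χ) (CcK K) := by
  rintro g f hf
  rw [mem_CcK] at hf ⊢
  obtain ⟨hlc, hcs⟩ := hf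
  have hne : ((g.t : Kˣ) : K) ≠ 0 := g.t.ne_zero
  have heq : repCc K ψ χ g f
      = (fun x : K => (χ g.t : ℂ) * ψ (g.s * x)) * (f ∘ (Homeomorph.mulRight₀ (g.t : K) hne)) :=
    rfl
  constructor
  · rw [heq]
    refine IsLocallyConstant.mul ?_ ?_
    · exact ((hψlc.comp_continuous (continuous_const.mul continuous_id)).comp
        (fun z => (χ g.t : ℂ) * z))
    · exact hlc.comp_continuous (Homeomorph.mulRight₀ (g.t : K) hne).continuous
  · rw [heq]
    exact (hcs.comp_homeomorph (Homeomorph.mulRight₀ (g.t : K) hne)).mul_left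

/-- The `TS`-module `𝕊 = C_c^∞(k^×)`. -/
def SRep (ψ : AddChar K ℂ) (hψlc : IsLocallyConstant (⇑ψ)) : Rep K ↥(SSx K) :=
  GRep.sub (repCx K ψ) (SSx_invariant ψ hψlc)

/-- The `TS`-module `𝔼[χ]`, i.e. `C_c^∞(k)` with the `χ`-twisted action. -/
def ERep (ψ : AddChar K ℂ) (hψlc : IsLocallyConstant (⇑ψ)) (χ : Kˣ →* ℂˣ) : Rep K ↥(CcK K) :=
  GRep.sub (repCc K ψ χ) (CcK_invariant ψ hψlc χ)

/-- The `TS`-module `𝕊^s`, a direct sum of `s` copies of `𝕊`. -/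
def SRepPow (ψ : AddChar K ℂ) (hψlc : IsLocallyConstant (⇑ψ)) (s : ℕ) :
    Rep K (Fin s → ↥(SSx K)) where
  toFun g := LinearMap.pi fun i => (SRep ψ hψlc g).comp (LinearMap.proj i)
  map_one' := by
    apply LinearMap.ext; intro v; funext i
    simp
  map_mul' g h := by
    apply LinearMap.ext; intro v; funext i
    simp [map_mul]

/-- The submodule `E` of `C_b^∞(k^×)` consisting of functions which are `χ`-eigenvectors
modulo `𝕊`; the quotient `E/𝕊` is the `χ`-eigenspace of `C_b^∞(k^×)/𝕊`. -/
def quotEigen (ψ : AddChar K ℂ) (χ : Kˣ →* ℂˣ) : Submodule ℂ (Kˣ → ℂ) where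
  carrier := {f | f ∈ Cb K ∧ ∀ u : Kˣ, repCx K ψ (Aff.xT u) f - (χ u : ℂ) • f ∈ SSx K}
  zero_mem' := ⟨(Cb K).zero_mem, fun u => by simpa using (SSx K).zero_mem⟩
  add_mem' {a b} ha hb := by
    refine ⟨(Cb K).add_mem ha.1 hb.1, fun u => ?_⟩
    rw [map_add, smul_add, add_sub_add_comm]
    exact (SSx K).add_mem (ha.2 u) (hb.2 u)
  smul_mem' c f hf := by
    refine ⟨(Cb K).smul_mem c hf.1, fun u => ?_⟩
    rw [map_smul, smul_comm, ← smul_sub]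
    exact (SSx K).smul_mem c (hf.2 u)

/-- Evaluation at `0 ∈ k`, realizing the quotient map `𝔼[χ] → ℂ_χ` with kernel `𝕊`. -/
def ev0 : ↥(CcK K) →ₗ[ℂ] ℂ where
  toFun f := (f : K → ℂ) 0
  map_add' f g := rfl
  map_smul' c f := rfl

end Concrete

/-! ### The diagonal torus in GL(2). -/

section GL2

variable {K : Type*} [Field K]

/-- The diagonal element `diag(a, b)` of `GL(2, K)`. -/
def diagGL (a b : Kˣ) : Matrix.GeneralLinearGroup (Fin 2) K where
  val := Matrix.diagonal ![(a : K), (b : K)]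
  inv := Matrix.diagonal ![((a : K))⁻¹, ((b : K))⁻¹]
  val_inv := by
    ext i j
    fin_cases i <;> fin_cases j <;>
      simp [Matrix.mul_apply, Fin.sum_univ_two, Matrix.diagonal, Matrix.one_apply,
        a.ne_zero, b.ne_zero]
  inv_val := by
    ext i j
    fin_cases i <;> fin_cases j <;>
      simp [Matrix.mul_apply, Fin.sum_univ_two, Matrix.diagonal, Matrix.one_apply,
        a.ne_zero, b.ne_zero]

end GL2

section Statements

open Aff

variable {K : Type*} [NontriviallyNormedField K] [IsUltrametricDist K] [ProperSpace K]

/-!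
A smooth perfect module of degree one embeds into `C_b^∞(k^×)`. Indeed each composition factor other
than `𝕊` has zero `ψ`-twisted `S`-coinvariants, so the twisted coinvariants of `𝔼[X]` are at most
one-dimensional, and a functional `l` cutting them out yields `v ↦ (x ↦ l (x_x v))`. A vector that
dies in the `θ`-twisted coinvariants for every character `θ` of `S` is zero, so the kernel of this
map meets the kernel of `𝔼[X] → X` trivially. It is therefore `S`-invariant and finite-dimensional,
and perfectness kills it.

The same principle shows that every nonzero submodule of `C_b^∞(k^×)` contains `𝕊`. If the images of
`i` and `j` meet, then `ker φ` is a nonzero submodule of `𝔼[X]`, hence contains the copy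
of `𝕊` that is the kernel of `𝔼[X] → X`. So `φ` factors through `X` with `S`-invariant values, which
is `ψ : X → Q^S`, and `ker φ` is the preimage of `Y = ker ψ`, that is, `𝔼[Y]`; it lifts to `P`
through `i`.
-/

section SAction

variable {F : Type*} [Field F] {V W : Type*} [AddCommGroup V] [Module ℂ V] [AddCommGroup W]
  [Module ℂ W]

lemma rho_sS_add (ρ : Rep F V) (a b : F) (v : V) :
    ρ (sS (a + b)) v = ρ (sS a) (ρ (sS b) v) := by
  rw [← Module.End.mul_apply, ← map_mul]
  congr 2
  ext <;> simp [sS]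

lemma rho_sS_zero (ρ : Rep F V) (v : V) : ρ (sS 0) v = v := by
  rw [show (sS 0 : Aff F) = 1 from rfl, map_one, Module.End.one_apply]

lemma rho_xT_sS (ρ : Rep F V) (u : Fˣ) (b : F) (v : V) :
    ρ (xT u) (ρ (sS b) v) = ρ (sS (u * b)) (ρ (xT u) v) := by
  simp only [← Module.End.mul_apply, ← map_mul, mul_sS, xT_t]

lemma sTwistKer_le_comap {ρ : Rep F V} {σ : Rep F W} (θ : AddChar F ℂ) {f : V →ₗ[ℂ] W}
    (hf : GRep.Equivariant ρ σ f) : sTwistKer ρ θ ≤ (sTwistKer σ θ).comap f := by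
  refine Submodule.span_le.2 ?_
  rintro _ ⟨b, v, rfl⟩
  simp only [SetLike.mem_coe, Submodule.mem_comap, map_sub, map_smul, hf _ v]
  exact Submodule.subset_span ⟨b, f v, rfl⟩

lemma sTwistKer_one (ρ : Rep F V) : sTwistKer ρ 1 = sCoinvKer ρ := by
  simp only [sTwistKer, sCoinvKer, AddChar.one_apply, one_smul]

lemma rho_xT_mem_sTwistKer (ρ : Rep F V) (ψ : AddChar F ℂ) (u : Fˣ) {v : V} (y : F)
    (hv : v ∈ sTwistKer ρ (AddChar.mulShift ψ (u * y))) :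
    ρ (xT u) v ∈ sTwistKer ρ (AddChar.mulShift ψ y) := by
  suffices h : sTwistKer ρ (AddChar.mulShift ψ (u * y)) ≤
      (sTwistKer ρ (AddChar.mulShift ψ y)).comap (ρ (xT u)) from h hv
  refine Submodule.span_le.2 ?_
  rintro _ ⟨b, v, rfl⟩
  simp only [SetLike.mem_coe, Submodule.mem_comap, map_sub, map_smul, rho_xT_sS]
  refine Submodule.subset_span ⟨u * b, ρ (xT u) v, ?_⟩
  simp only [AddChar.mulShift_apply, mul_assoc, mul_left_comm y]

lemma sInv_le_sTwistKer (ρ : Rep F V) {θ : AddChar F ℂ} (hθ : θ ≠ 1) :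
    sInv ρ ≤ sTwistKer ρ θ := by
  obtain ⟨c, hc⟩ := AddChar.ne_one_iff.1 hθ
  intro v hv
  have hmem : (1 - θ c) • v ∈ sTwistKer ρ θ :=
    Submodule.subset_span ⟨c, v, by rw [hv c, sub_smul, one_smul]⟩
  exact (Submodule.smul_mem_iff _ (sub_ne_zero.2 hc.symm)).1 hmem

end SAction

section Averages

open MeasureTheory Metric

section CompactSets

variable {A E : Type*} [TopologicalSpace A] [MeasurableSpace A] (μ : Measure A)
  [IsFiniteMeasureOnCompacts μ]

lemma measureReal_ne_zero_of_mem_nhds [μ.IsOpenPosMeasure] {s t : Set A} {x : A}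
    (hs : s ∈ nhds x) (hst : s ⊆ t) (ht : IsCompact t) : μ.real s ≠ 0 := by
  rw [measureReal_def, ENNReal.toReal_ne_zero]
  exact ⟨(Measure.measure_pos_of_mem_nhds μ hs).ne',
    ((measure_mono hst).trans_lt ht.measure_lt_top).ne⟩

lemma setIntegral_swap_of_isCompact [OpensMeasurableSpace A] [T2Space A]
    [SecondCountableTopology A] [SFinite μ] [NormedAddCommGroup E] [NormedSpace ℝ E]
    {G : A → A → E} (hG : Continuous (Function.uncurry G)) {s t : Set A} (hs : IsCompact s)
    (ht : IsCompact t) :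
    ∫ a in s, ∫ b in t, G a b ∂μ ∂μ = ∫ b in t, ∫ a in s, G a b ∂μ ∂μ := by
  apply integral_integral_swap
  rw [Measure.prod_restrict]
  exact hG.continuousOn.integrableOn_compact (hs.prod ht)

end CompactSets

section Translation

variable {A E : Type*} [NormedAddCommGroup A] [IsUltrametricDist A] [MeasurableSpace A]
  [BorelSpace A] (μ : Measure A)

lemma setIntegral_closedBall_add_left [μ.IsAddLeftInvariant] [NormedAddCommGroup E]
    [NormedSpace ℝ E] (G : A → E) {r : ℝ} {a : A} (ha : ‖a‖ ≤ r) :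
    ∫ b in closedBall 0 r, G (a + b) ∂μ = ∫ b in closedBall 0 r, G b ∂μ := by
  have hpre : (a + ·) ⁻¹' closedBall (0 : A) r = closedBall 0 r := by
    ext b
    simp only [Set.mem_preimage, mem_closedBall_zero_iff]
    refine ⟨fun h => ?_, fun h => (IsUltrametricDist.norm_add_le_max a b).trans (max_le ha h)⟩
    calc ‖b‖ = ‖-a + (a + b)‖ := by rw [neg_add_cancel_left]
      _ ≤ max ‖-a‖ ‖a + b‖ := IsUltrametricDist.norm_add_le_max _ _
      _ ≤ r := max_le (by rwa [norm_neg]) h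
  have := (measurePreserving_add_left μ a).setIntegral_preimage_emb
    (measurableEmbedding_addLeft a) G (closedBall 0 r)
  rwa [hpre] at this

lemma setIntegral_addChar_closedBall_eq_zero [μ.IsAddLeftInvariant] {θ : AddChar A ℂ} {r : ℝ}
    {a : A} (ha : ‖a‖ ≤ r) (hθ : θ a ≠ 1) : ∫ b in closedBall 0 r, θ b ∂μ = 0 := by
  have h := setIntegral_closedBall_add_left μ θ ha
  simp only [AddChar.map_add_eq_mul, integral_const_mul] at h
  exact (mul_left_eq_self₀.1 h).resolve_left hθ

lemma setIntegral_closedBall_eq_zero_of_le [ProperSpace A] [μ.IsAddHaarMeasure]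
    [NormedAddCommGroup E] [NormedSpace ℝ E] [CompleteSpace E] {G : A → E} (hG : Continuous G)
    {r s : ℝ} (hr : 0 < r) (hrs : r ≤ s) (h : ∀ a, ∫ b in closedBall 0 r, G (a + b) ∂μ = 0) :
    ∫ b in closedBall 0 s, G b ∂μ = 0 := by
  have hswap := setIntegral_swap_of_isCompact μ (G := fun a b => G (a + b))
    (hG.comp continuous_add) (isCompact_closedBall 0 s) (isCompact_closedBall 0 r)
  have hinner : Set.EqOn (fun b => ∫ a in closedBall 0 s, G (a + b) ∂μ)
      (fun _ => ∫ a in closedBall 0 s, G a ∂μ) (closedBall 0 r) := fun b hb => by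
    simp only [add_comm _ b]
    exact setIntegral_closedBall_add_left μ G ((mem_closedBall_zero_iff.1 hb).trans hrs)
  simp only [h, integral_zero] at hswap
  rw [setIntegral_congr_fun isClosed_closedBall.measurableSet hinner, setIntegral_const] at hswap
  exact (smul_eq_zero.1 hswap.symm).resolve_left
    (measureReal_ne_zero_of_mem_nhds μ (closedBall_mem_nhds 0 hr) subset_rfl
      (isCompact_closedBall 0 r))

end Translation

section Fourier

variable {F : Type*} [NontriviallyNormedField F]

lemma continuous_mulShift {ψ : AddChar F ℂ} (hψ : Continuous ψ) (y : F) :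
    Continuous (AddChar.mulShift ψ y) :=
  hψ.comp (continuous_const.mul continuous_id)

/-- The annihilator of the closed ball of radius `R` for the pairing `(b, y) ↦ ψ (b * y)`. -/
def ballAnnihilator (ψ : AddChar F ℂ) (R : ℝ) : Set F :=
  {b | ∀ y ∈ closedBall (0 : F) R, ψ (b * y) = 1}

lemma isClosed_ballAnnihilator {ψ : AddChar F ℂ} (hψ : Continuous ψ) (R : ℝ) :
    IsClosed (ballAnnihilator ψ R) := by
  simp only [ballAnnihilator, Set.ofPred_forall]
  exact isClosed_biInter fun y _ =>
    isClosed_eq (hψ.comp (continuous_id.mul continuous_const)) continuous_const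

lemma norm_lt_of_mem_ballAnnihilator {ψ : AddChar F ℂ} {c : F} (hc : ψ c ≠ 1) {δ : ℝ}
    (hδ : 0 < δ) {b : F} (hb : b ∈ ballAnnihilator ψ (‖c‖ / δ)) : ‖b‖ < δ := by
  by_contra! hδb
  have hb0 : b ≠ 0 := norm_pos_iff.1 (hδ.trans_le hδb)
  refine hc ?_
  rw [← mul_div_cancel₀ c hb0]
  refine hb (c / b) ?_
  rw [mem_closedBall_zero_iff, norm_div]
  gcongr

lemma eventually_forall_closedBall_addChar_eq_one {ψ : AddChar F ℂ} (hψ : IsLocallyConstant ψ)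
    (R : ℝ) : ∀ᶠ b in nhds (0 : F), ∀ y ∈ closedBall (0 : F) R, ψ (b * y) = 1 := by
  obtain ⟨ε, hε, hψε⟩ := Metric.eventually_nhds_iff.1 (hψ.eventually_eq 0)
  have hR : 0 < |R| + 1 := by positivity
  filter_upwards [ball_mem_nhds (0 : F) (div_pos hε hR)] with b hb y hy
  rw [mem_ball_zero_iff, lt_div_iff₀ hR] at hb
  rw [mem_closedBall_zero_iff] at hy
  rw [hψε, ψ.map_zero_eq_one]
  rw [dist_zero_right, norm_mul]
  calc ‖b‖ * ‖y‖ ≤ ‖b‖ * (|R| + 1) := by gcongr; linarith [le_abs_self R]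
    _ < ε := hb

variable [IsUltrametricDist F] [MeasurableSpace F] [BorelSpace F] (μ : Measure F)
  [μ.IsAddHaarMeasure]

/-- The double integral of `ψ (y * b) * f b` over `y` and `b` collapses, by orthogonality of
characters in `y`, to an integral of `f` over the annihilator of a ball, where `f` is constant. -/
lemma eq_zero_of_forall_setIntegral_mulShift_mul_eq_zero [ProperSpace F] {ψ : AddChar F ℂ}
    (hψ : IsLocallyConstant ψ) {c : F} (hc : ψ c ≠ 1) {f : F → ℂ} (hf : Continuous f) {δ r : ℝ}
    (hδ : 0 < δ) (hfδ : ∀ b, ‖b‖ < δ → f b = f 0) (hr : 0 < r)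
    (h : ∀ y ∈ closedBall (0 : F) (‖c‖ / δ), ∫ b in closedBall 0 r, ψ (y * b) * f b ∂μ = 0) :
    f 0 = 0 := by
  set R := ‖c‖ / δ
  set N := ballAnnihilator ψ R
  have hN : N ∈ nhds (0 : F) := eventually_forall_closedBall_addChar_eq_one hψ R
  have hc0 : c ≠ 0 := by
    rintro rfl
    exact hc ψ.map_zero_eq_one
  have horth (b : F) : ∫ y in closedBall 0 R, ψ (y * b) * f b ∂μ =
      N.indicator (fun _ => μ.real (closedBall (0 : F) R) • f 0) b := by
    by_cases hb : b ∈ N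
    · rw [Set.indicator_of_mem hb, ← setIntegral_const]
      refine setIntegral_congr_fun isClosed_closedBall.measurableSet fun y hy => ?_
      simp only [mul_comm y b, hb y hy, one_mul, hfδ b (norm_lt_of_mem_ballAnnihilator hc hδ hb)]
    · obtain ⟨y, hy, hyb⟩ := not_forall₂.1 hb
      rw [Set.indicator_of_notMem hb, integral_mul_const]
      simp only [mul_comm _ b, ← AddChar.mulShift_apply (ψ := ψ)]
      rw [setIntegral_addChar_closedBall_eq_zero μ (mem_closedBall_zero_iff.1 hy) hyb, zero_mul]
  have hswap := setIntegral_swap_of_isCompact μ (G := fun y b => ψ (y * b) * f b)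
    ((hψ.continuous.comp continuous_mul).mul (hf.comp continuous_snd))
    (isCompact_closedBall 0 R) (isCompact_closedBall 0 r)
  simp only [horth] at hswap
  rw [setIntegral_eq_zero_of_forall_eq_zero h, setIntegral_indicator
    (isClosed_ballAnnihilator hψ.continuous R).measurableSet, setIntegral_const] at hswap
  refine ((smul_eq_zero.1 ((smul_eq_zero.1 hswap.symm).resolve_left ?_)).resolve_left ?_)
  · exact measureReal_ne_zero_of_mem_nhds μ
      (Filter.inter_mem (closedBall_mem_nhds 0 hr) hN) Set.inter_subset_left
      (isCompact_closedBall 0 r)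
  · exact measureReal_ne_zero_of_mem_nhds μ
      (closedBall_mem_nhds 0 (div_pos (norm_pos_iff.2 hc0) hδ)) subset_rfl
      (isCompact_closedBall 0 R)

end Fourier

end Averages

section Smoothness

variable {F : Type*} [Field F] [TopologicalSpace F] {V : Type*} [AddCommGroup V] [Module ℂ V]
  {ρ : Rep F V}

/-- Smoothness of the restriction of a `TS`-module to `S`. -/
def SSmooth (ρ : Rep F V) : Prop :=
  ∀ v, ∀ᶠ b in nhds (0 : F), ρ (sS b) v = v

lemma continuous_sS : Continuous (sS : F → Aff F) :=
  continuous_induced_rng.2 (continuous_const.prodMk continuous_id)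

lemma continuous_xT : Continuous (xT : Fˣ → Aff F) :=
  continuous_induced_rng.2 (continuous_id.prodMk continuous_const)

lemma continuous_mul_left_aff [ContinuousAdd F] [ContinuousMul F] (g : Aff F) :
    Continuous (g * · : Aff F → Aff F) := by
  have hcoord : Continuous fun h : Aff F => (h.t, h.s) := continuous_induced_dom
  exact continuous_induced_rng.2 ((continuous_const.mul hcoord.fst).prodMk
    (continuous_const.add (continuous_const.mul hcoord.snd)))

lemma IsSmoothRep.sSmooth (hρ : IsSmoothRep ρ) : SSmooth ρ := fun v =>
  ((hρ v).preimage continuous_sS).mem_nhds (rho_sS_zero ρ v)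

lemma IsSmoothRep.isOpen_setOf_rho_xT_eq (hρ : IsSmoothRep ρ) (v : V) :
    IsOpen {u : Fˣ | ρ (xT u) v = v} :=
  (hρ v).preimage continuous_xT

lemma IsSmoothRep.sub (hρ : IsSmoothRep ρ) {U : Submodule ℂ V} (hU : GRep.Invariant ρ U) :
    IsSmoothRep (GRep.sub ρ hU) := fun v => by
  simpa only [Subtype.ext_iff, GRep.sub_apply] using hρ v

lemma IsSmoothRep.quot [ContinuousAdd F] [ContinuousMul F] (hρ : IsSmoothRep ρ)
    {U : Submodule ℂ V} (hU : GRep.Invariant ρ U) : IsSmoothRep (GRep.quot ρ U hU) := by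
  intro x
  obtain ⟨v, rfl⟩ := U.mkQ_surjective x
  refine isOpen_iff_mem_nhds.2 fun g hg => ?_
  have hfix : (g⁻¹ * ·) ⁻¹' {h | ρ h v = v} ∈ nhds g := by
    refine ((hρ v).preimage (continuous_mul_left_aff g⁻¹)).mem_nhds ?_
    simp only [Set.mem_preimage, inv_mul_cancel, Set.mem_ofPred_eq, map_one, Module.End.one_apply]
  filter_upwards [hfix] with h hh
  have hmk : GRep.quot ρ U hU (g⁻¹ * h) (U.mkQ v) = U.mkQ v := by
    rw [← GRep.mkQ_equivariant, hh]
  rw [← mul_inv_cancel_left g h, map_mul, Module.End.mul_apply, hmk, hg]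

lemma SSmooth.quot (hρ : SSmooth ρ) {U : Submodule ℂ V} (hU : GRep.Invariant ρ U) :
    SSmooth (GRep.quot ρ U hU) := by
  intro x
  obtain ⟨v, rfl⟩ := U.mkQ_surjective x
  filter_upwards [hρ v] with b hb
  rw [← GRep.mkQ_equivariant, hb]

lemma SSmooth.isLocallyConstant [IsTopologicalAddGroup F] (hρ : SSmooth ρ) (v : V) :
    IsLocallyConstant fun b : F => ρ (sS b) v := by
  refine (IsLocallyConstant.iff_eventually_eq _).2 fun b => ?_
  have hsub : Filter.Tendsto (fun b' : F => b' - b) (nhds b) (nhds 0) :=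
    tendsto_sub_nhds_zero_iff.2 Filter.tendsto_id
  filter_upwards [hsub.eventually (hρ v)] with b' hb'
  rw [← add_sub_cancel b b', rho_sS_add, hb']

lemma SSmooth.continuous_dual [IsTopologicalAddGroup F] (hρ : SSmooth ρ) (v : V)
    (l : Module.Dual ℂ V) : Continuous fun b : F => l (ρ (sS b) v) :=
  ((hρ.isLocallyConstant v).comp l).continuous

end Smoothness

section Localisation

open MeasureTheory Metric

variable {F : Type*} [NontriviallyNormedField F] {V : Type*} [AddCommGroup V] [Module ℂ V]
  {ρ : Rep F V}

section Measure

variable [MeasurableSpace F] (μ : Measure F)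

/-- The average over the compact subgroup `{b : ‖b‖ ≤ r}` of `S` of the `θ⁻¹`-twisted translates of
`w` vanishes. As `V` carries no topology, this is tested against all linear functionals. -/
def TwistedAverageVanishes (ρ : Rep F V) (θ : AddChar F ℂ) (r : ℝ) (w : V) : Prop :=
  ∀ l : Module.Dual ℂ V, ∫ b in closedBall (0 : F) r, θ (-b) * l (ρ (sS b) w) ∂μ = 0

variable [BorelSpace F]

lemma isOpen_setOf_twistedAverageVanishes {ψ : AddChar F ℂ} (hψ : IsLocallyConstant ψ) (r : ℝ)
    (w : V) : IsOpen {y | TwistedAverageVanishes μ ρ (AddChar.mulShift ψ y) r w} := by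
  rw [isOpen_iff_mem_nhds]
  intro y hy
  have hsub : Filter.Tendsto (fun y' : F => y' - y) (nhds y) (nhds 0) :=
    tendsto_sub_nhds_zero_iff.2 Filter.tendsto_id
  filter_upwards [hsub.eventually (eventually_forall_closedBall_addChar_eq_one hψ r)]
    with y' hy' l
  rw [← hy l]
  refine setIntegral_congr_fun isClosed_closedBall.measurableSet fun b hb => ?_
  have hψb : ψ ((y' - y) * -b) = 1 := hy' (-b) (by rwa [mem_closedBall_zero_iff, norm_neg,
    ← mem_closedBall_zero_iff])
  simp only [AddChar.mulShift_apply]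
  rw [← sub_add_cancel y' y, add_mul, ψ.map_add_eq_mul, hψb, one_mul]

variable [IsUltrametricDist F] [ProperSpace F] [μ.IsAddHaarMeasure]

lemma twistedAverageVanishes_rho_sS_sub_smul (hρ : SSmooth ρ) {θ : AddChar F ℂ}
    (hθ : Continuous θ) {r : ℝ} {a : F} (ha : ‖a‖ ≤ r) (v : V) :
    TwistedAverageVanishes μ ρ θ r (ρ (sS a) v - θ a • v) := by
  intro l
  have hcont : Continuous fun b : F => θ (-b) * l (ρ (sS b) v) :=
    (hθ.comp continuous_neg).mul (hρ.continuous_dual v l)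
  have hsplit (b : F) : θ (-b) * l (ρ (sS b) (ρ (sS a) v - θ a • v)) =
      θ a * (θ (-(a + b)) * l (ρ (sS (a + b)) v)) - θ a * (θ (-b) * l (ρ (sS b) v)) := by
    have hθa : θ (-b) = θ a * θ (-(a + b)) := by
      rw [← θ.map_add_eq_mul, neg_add, add_neg_cancel_left]
    rw [map_sub, map_sub, map_smul, map_smul, ← rho_sS_add, add_comm b a, smul_eq_mul, mul_sub,
      ← mul_assoc (θ a), ← hθa]
    ring
  simp only [hsplit]
  rw [integral_sub, integral_const_mul, integral_const_mul,
    setIntegral_closedBall_add_left μ (fun b => θ (-b) * l (ρ (sS b) v)) ha, sub_self]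
  · exact ((hcont.comp (continuous_const.add continuous_id)).const_mul
      _).continuousOn.integrableOn_compact (isCompact_closedBall 0 r)
  · exact (hcont.const_mul _).continuousOn.integrableOn_compact (isCompact_closedBall 0 r)

lemma exists_forall_twistedAverageVanishes (hρ : SSmooth ρ) {θ : AddChar F ℂ}
    (hθ : Continuous θ) {w : V} (hw : w ∈ sTwistKer ρ θ) :
    ∃ R, ∀ r, R ≤ r → TwistedAverageVanishes μ ρ θ r w := by
  have hint (v : V) (l : Module.Dual ℂ V) (r : ℝ) :
      IntegrableOn (fun b : F => θ (-b) * l (ρ (sS b) v)) (closedBall 0 r) μ :=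
    ((hθ.comp continuous_neg).mul (hρ.continuous_dual v l)).continuousOn.integrableOn_compact
      (isCompact_closedBall 0 r)
  unfold sTwistKer at hw
  induction hw using Submodule.span_induction with
  | mem w hw =>
    obtain ⟨a, v, rfl⟩ := hw
    exact ⟨‖a‖, fun r hr => twistedAverageVanishes_rho_sS_sub_smul μ hρ hθ hr v⟩
  | zero => exact ⟨0, fun r _ l => by simp only [map_zero, mul_zero, integral_zero]⟩
  | add v w _ _ hv hw =>
    obtain ⟨R, hR⟩ := hv
    obtain ⟨R', hR'⟩ := hw
    refine ⟨max R R', fun r hr l => ?_⟩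
    simp only [map_add, mul_add]
    rw [integral_add (hint v l r) (hint w l r), hR r (le_of_max_le_left hr) l,
      hR' r (le_of_max_le_right hr) l, add_zero]
  | smul c v _ hv =>
    obtain ⟨R, hR⟩ := hv
    refine ⟨R, fun r hr l => ?_⟩
    simp only [map_smul, smul_eq_mul, mul_left_comm _ c]
    rw [integral_const_mul, hR r hr l, mul_zero]

lemma TwistedAverageVanishes.mono (hρ : SSmooth ρ) {θ : AddChar F ℂ} (hθ : Continuous θ) {w : V}
    {r s : ℝ} (hr : 0 < r) (hrs : r ≤ s) (hw : TwistedAverageVanishes μ ρ θ r w) :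
    TwistedAverageVanishes μ ρ θ s w := by
  intro l
  refine setIntegral_closedBall_eq_zero_of_le μ
    ((hθ.comp continuous_neg).mul (hρ.continuous_dual w l)) hr hrs fun a => ?_
  have htranslate (b : F) : θ (-(a + b)) * l (ρ (sS (a + b)) w) =
      θ (-a) * (θ (-b) * (l ∘ₗ ρ (sS a)) (ρ (sS b) w)) := by
    rw [neg_add, θ.map_add_eq_mul, rho_sS_add, LinearMap.comp_apply, mul_assoc]
  refine (integral_congr_ae (.of_forall htranslate)).trans ?_
  rw [integral_const_mul, hw, mul_zero]

lemma eq_zero_of_forall_twistedAverageVanishes (hρ : SSmooth ρ) {ψ : AddChar F ℂ}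
    (hψ : IsLocallyConstant ψ) (hψ1 : ψ ≠ 1) {w : V}
    (hw : ∀ y, ∃ r > 0, TwistedAverageVanishes μ ρ (AddChar.mulShift ψ y) r w) : w = 0 := by
  obtain ⟨c, hc⟩ := AddChar.ne_one_iff.1 hψ1
  obtain ⟨δ, hδ, hwδ⟩ := Metric.eventually_nhds_iff.1 (hρ w)
  obtain ⟨⟨r, hr⟩, hball⟩ := (isCompact_closedBall (0 : F) (‖c‖ / δ)).elim_directed_cover
    (fun r : {r : ℝ // 0 < r} => {y | TwistedAverageVanishes μ ρ (AddChar.mulShift ψ y) r w})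
    (fun r => isOpen_setOf_twistedAverageVanishes μ hψ r w)
    (fun y _ => by
      obtain ⟨r, hr, hy⟩ := hw y
      exact Set.mem_iUnion.2 ⟨⟨r, hr⟩, hy⟩)
    (Monotone.directed_le fun r s hrs y hy =>
      TwistedAverageVanishes.mono μ hρ (continuous_mulShift hψ.continuous y) r.2 hrs hy)
  refine (Module.forall_dual_apply_eq_zero_iff ℂ w).1 fun l => ?_
  rw [← rho_sS_zero ρ w]
  refine eq_zero_of_forall_setIntegral_mulShift_mul_eq_zero μ hψ hc
    (hρ.continuous_dual w l) hδ (fun b hb => ?_) hr fun y hy => ?_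
  · rw [hwδ (by rwa [dist_zero_right]), rho_sS_zero]
  · have := hball (show -y ∈ _ by rwa [mem_closedBall_zero_iff, norm_neg,
      ← mem_closedBall_zero_iff]) l
    simpa only [AddChar.mulShift_apply, neg_mul_neg] using this

end Measure

variable [IsUltrametricDist F] [ProperSpace F]

lemma eq_zero_of_forall_mem_sTwistKer (hρ : SSmooth ρ) {ψ : AddChar F ℂ}
    (hψ : IsLocallyConstant ψ) (hψ1 : ψ ≠ 1) {w : V}
    (hw : ∀ y, w ∈ sTwistKer ρ (AddChar.mulShift ψ y)) : w = 0 := by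
  borelize F
  refine eq_zero_of_forall_twistedAverageVanishes Measure.addHaar hρ hψ hψ1 fun y => ?_
  obtain ⟨R, hR⟩ := exists_forall_twistedAverageVanishes Measure.addHaar hρ
    (continuous_mulShift hψ.continuous y) (hw y)
  exact ⟨max R 1, by positivity, hR _ (le_max_left R 1)⟩

lemma disjoint_sInv_sCoinvKer (hρ : SSmooth ρ) {ψ : AddChar F ℂ} (hψ : IsLocallyConstant ψ)
    (hψ1 : ψ ≠ 1) : Disjoint (sInv ρ) (sCoinvKer ρ) := by
  refine Submodule.disjoint_def.2 fun w hinv hcoinv =>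
    eq_zero_of_forall_mem_sTwistKer hρ hψ hψ1 fun y => ?_
  by_cases hy : AddChar.mulShift ψ y = 1
  · rwa [hy, sTwistKer_one]
  · exact sInv_le_sTwistKer ρ hy hinv

end Localisation

section FunctionSpaces

variable {F : Type*} [NontriviallyNormedField F] {ψ : AddChar F ℂ}

lemma repCx_sS_apply (b : F) (f : Fˣ → ℂ) (x : Fˣ) :
    repCx F ψ (sS b) f x = ψ (b * x) * f x := by
  rw [repCx_apply, sS_s, sS_t, mul_one]

lemma repCx_xT_apply (u : Fˣ) (f : Fˣ → ℂ) (x : Fˣ) : repCx F ψ (xT u) f x = f (x * u) := by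
  rw [repCx_apply, xT_s, xT_t, zero_mul, ψ.map_zero_eq_one, one_mul]

lemma isLocallyConstant_addChar_mul (hψ : IsLocallyConstant ψ) (b : F) :
    IsLocallyConstant fun x : Fˣ => ψ (b * x) :=
  hψ.comp_continuous (continuous_const.mul Units.continuous_val)

lemma hasCompactSupport_units_of_forall_norm_ge {f : Fˣ → ℂ} {C : Set F} (hC : IsCompact C) {δ : ℝ}
    (hδ : 0 < δ) (hf : ∀ x, f x ≠ 0 → (x : F) ∈ C ∧ δ ≤ ‖(x : F)‖) : HasCompactSupport f := by
  have hCδ : IsCompact (C ∩ {x | δ ≤ ‖x‖}) :=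
    hC.inter_right (isClosed_le continuous_const continuous_norm)
  have hunits : C ∩ {x | δ ≤ ‖x‖} ⊆ Set.range ((↑) : Fˣ → F) := fun x hx =>
    ⟨Units.mk0 x (norm_pos_iff.1 (hδ.trans_le hx.2)), rfl⟩
  exact HasCompactSupport.of_support_subset_isCompact
    ((Units.isEmbedding_val₀.isInducing.isCompact_preimage_iff hunits).2 hCδ) hf

lemma repCx_sS_sub_mem_SSx (hψ : IsLocallyConstant ψ) {f : Fˣ → ℂ} (hf : f ∈ Cb F) (b : F) :
    repCx F ψ (sS b) f - f ∈ SSx F := by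
  have heq : repCx F ψ (sS b) f - f = fun x : Fˣ => (ψ (b * x) - 1) * f x := by
    funext x
    rw [Pi.sub_apply, repCx_sS_apply, sub_one_mul]
  rw [heq]
  refine ⟨((isLocallyConstant_addChar_mul hψ b).comp (· - 1)).mul hf.1, ?_⟩
  obtain ⟨δ, hδ, hψδ⟩ :=
    Metric.eventually_nhds_iff.1 (eventually_forall_closedBall_addChar_eq_one hψ ‖b‖)
  refine hasCompactSupport_units_of_forall_norm_ge hf.2 hδ fun x hx =>
    ⟨subset_closure ⟨x, right_ne_zero_of_mul hx, rfl⟩, ?_⟩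
  by_contra! hxδ
  refine left_ne_zero_of_mul hx (sub_eq_zero.2 ?_)
  rw [mul_comm]
  exact hψδ (by rwa [dist_zero_right]) b (by rw [mem_closedBall_zero_iff])

lemma sSmooth_SRep (hψ : IsLocallyConstant ψ) : SSmooth (SRep ψ hψ) := by
  intro f
  obtain ⟨R, hR⟩ := ((f.2.2.isCompact.image Units.continuous_val).isBounded).subset_closedBall 0
  filter_upwards [eventually_forall_closedBall_addChar_eq_one hψ R] with b hb
  ext x
  change repCx F ψ (sS b) f x = (f : Fˣ → ℂ) x
  rw [repCx_sS_apply]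
  by_cases hx : (f : Fˣ → ℂ) x = 0
  · rw [hx, mul_zero]
  · rw [hb x (hR ⟨x, subset_closure hx, rfl⟩), one_mul]

lemma indicator_mem_SSx {f : Fˣ → ℂ} (hf : f ∈ SSx F) {O : Set Fˣ} (hO : IsClopen O) :
    O.indicator f ∈ SSx F := by
  refine ⟨(LocallyConstant.indicator ⟨f, hf.1⟩ hO).isLocallyConstant, hf.2.mono ?_⟩
  rw [Set.support_indicator]
  exact Set.inter_subset_right

lemma mem_of_forall_exists_isClopen (N : Submodule ℂ ↥(SSx F)) (f : ↥(SSx F))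
    (h : ∀ x, f.1 x ≠ 0 → ∃ O : Set Fˣ, IsClopen O ∧ x ∈ O ∧
      ∀ g : ↥(SSx F), Function.support g.1 ⊆ O → g ∈ N) : f ∈ N := by
  suffices hcover : ∃ O : Set Fˣ, IsClopen O ∧ tsupport f.1 ⊆ O ∧
      ∀ g : ↥(SSx F), Function.support g.1 ⊆ O → g ∈ N by
    obtain ⟨O, -, hfO, hON⟩ := hcover
    exact hON f (subset_closure.trans hfO)
  have hsupp : tsupport f.1 = Function.support f.1 :=
    (f.2.1.isClopen_fiber 0).compl.isClosed.closure_eq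
  refine f.2.2.isCompact.induction_on (p := fun s => ∃ O : Set Fˣ, IsClopen O ∧ s ⊆ O ∧
    ∀ g : ↥(SSx F), Function.support g.1 ⊆ O → g ∈ N) ?_ ?_ ?_ ?_
  · refine ⟨∅, isClopen_empty, subset_rfl, fun g hg => ?_⟩
    obtain rfl : g = 0 :=
      Subtype.ext (Function.support_eq_empty_iff.1 (Set.subset_empty_iff.1 hg))
    exact N.zero_mem
  · rintro s t hst ⟨O, hO, htO, hON⟩
    exact ⟨O, hO, hst.trans htO, hON⟩
  · rintro s t ⟨O, hO, hsO, hON⟩ ⟨O', hO', htO', hON'⟩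
    refine ⟨O ∪ O', hO.union hO', Set.union_subset_union hsO htO', fun g hg => ?_⟩
    rw [show g = ⟨_, indicator_mem_SSx g.2 hO⟩ + ⟨_, indicator_mem_SSx g.2 hO.compl⟩ from
      Subtype.ext (Set.indicator_self_add_compl O g.1).symm]
    refine N.add_mem (hON _ (Set.support_indicator_subset)) (hON' _ ?_)
    rw [Set.support_indicator]
    exact fun x hx => (hg hx.2).resolve_left hx.1
  · intro x hx
    obtain ⟨O, hO, hxO, hON⟩ := h x (hsupp.subset hx)
    exact ⟨O, mem_nhdsWithin_of_mem_nhds (hO.isOpen.mem_nhds hxO), O, hO, subset_rfl, hON⟩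

lemma mem_sTwistKer_SRep_of_forall_addChar_eq (hψ : IsLocallyConstant ψ) {θ : AddChar F ℂ} {b : F}
    {z : ℂ} (hz : z ≠ θ b) {g : ↥(SSx F)} (hg : ∀ x, g.1 x ≠ 0 → ψ (b * x) = z) :
    g ∈ sTwistKer (SRep ψ hψ) θ := by
  have hmem : (z - θ b) • g ∈ sTwistKer (SRep ψ hψ) θ := by
    refine Submodule.subset_span ⟨b, g, Subtype.ext (funext fun x => ?_)⟩
    change (z - θ b) * g.1 x = repCx F ψ (sS b) g.1 x - θ b * g.1 x
    rw [repCx_sS_apply, ← sub_mul]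
    by_cases hx : g.1 x = 0
    · rw [hx, mul_zero, mul_zero]
    · rw [hg x hx]
  exact (Submodule.smul_mem_iff _ (sub_ne_zero.2 hz)).1 hmem

lemma mem_sTwistKer_SRep (hψ : IsLocallyConstant ψ) (hψ1 : ψ ≠ 1) {a : F} {f : ↥(SSx F)}
    (hf : ∀ x : Fˣ, (x : F) = a → f.1 x = 0) :
    f ∈ sTwistKer (SRep ψ hψ) (AddChar.mulShift ψ a) := by
  obtain ⟨c, hc⟩ := AddChar.ne_one_iff.1 hψ1
  refine mem_of_forall_exists_isClopen _ f fun x hx => ?_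
  have hxa : (x : F) - a ≠ 0 := fun h => hx (hf x (sub_eq_zero.1 h))
  set b := c / (x - a)
  have hb : ψ (b * x) ≠ AddChar.mulShift ψ a b := by
    have hsplit : b * x = c + a * b := by
      simp only [b]
      field_simp
      ring
    rw [hsplit, ψ.map_add_eq_mul, AddChar.mulShift_apply]
    exact fun h => hc ((mul_eq_right₀ (ψ.val_isUnit _).ne_zero).1 h)
  exact ⟨_, (isLocallyConstant_addChar_mul hψ b).isClopen_fiber (ψ (b * x)), rfl, fun g hg =>
    mem_sTwistKer_SRep_of_forall_addChar_eq hψ hb fun y hy => hg hy⟩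

lemma sCoinvKer_SRep (hψ : IsLocallyConstant ψ) (hψ1 : ψ ≠ 1) : sCoinvKer (SRep ψ hψ) = ⊤ := by
  rw [← sTwistKer_one, ← AddChar.mulShift_zero ψ]
  exact eq_top_iff.2 fun f _ => mem_sTwistKer_SRep hψ hψ1 fun x hx => absurd hx x.ne_zero

lemma exists_mem_SSx_apply_ne_zero (hψ : IsLocallyConstant ψ) (hψ1 : ψ ≠ 1)
    {N : Submodule ℂ (Fˣ → ℂ)} (hN : GRep.Invariant (repCx F ψ) N) (hNCb : N ≤ Cb F)
    (hN0 : N ≠ ⊥) (x : Fˣ) : ∃ g ∈ N, g ∈ SSx F ∧ g x ≠ 0 := by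
  obtain ⟨c, hc⟩ := AddChar.ne_one_iff.1 hψ1
  obtain ⟨f, hf, hf0⟩ := N.ne_bot_iff.1 hN0
  obtain ⟨y, hy⟩ := Function.ne_iff.1 hf0
  obtain ⟨f', hf', hf'x⟩ : ∃ f' ∈ N, f' x ≠ 0 :=
    ⟨_, hN (xT (x⁻¹ * y)) f hf, by rwa [repCx_xT_apply, mul_inv_cancel_left]⟩
  refine ⟨repCx F ψ (sS (c / x)) f' - f', N.sub_mem (hN _ _ hf') hf',
    repCx_sS_sub_mem_SSx hψ (hNCb hf') _, ?_⟩
  rw [Pi.sub_apply, repCx_sS_apply, div_mul_cancel₀ _ x.ne_zero, ← sub_one_mul]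
  exact mul_ne_zero (sub_ne_zero.2 hc) hf'x

lemma exists_mem_apply_eq {N : Submodule ℂ ↥(SSx F)} {y : F}
    (hN : ∀ x : Fˣ, ∃ g ∈ N, g.1 x ≠ 0) (f : ↥(SSx F)) :
    ∃ g ∈ N, ∀ x : Fˣ, (x : F) = y → (f - g).1 x = 0 := by
  by_cases hy : y = 0
  · exact ⟨0, N.zero_mem, fun x hx => absurd (hx.trans hy) x.ne_zero⟩
  · obtain ⟨g, hg, hgy⟩ := hN (Units.mk0 y hy)
    refine ⟨(f.1 (Units.mk0 y hy) / g.1 (Units.mk0 y hy)) • g, N.smul_mem _ hg, fun x hx => ?_⟩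
    obtain rfl : x = Units.mk0 y hy := Units.ext hx
    exact sub_eq_zero.2 (div_mul_cancel₀ _ hgy).symm

variable [IsUltrametricDist F] [ProperSpace F]

lemma SSx_le (hψ : IsLocallyConstant ψ) (hψ1 : ψ ≠ 1) {N : Submodule ℂ (Fˣ → ℂ)}
    (hN : GRep.Invariant (repCx F ψ) N) (hNCb : N ≤ Cb F) (hN0 : N ≠ ⊥) : SSx F ≤ N := by
  intro f hf
  have hinv : GRep.Invariant (SRep ψ hψ) (N.comap (SSx F).subtype) := fun g v hv => hN g v.1 hv
  have hval (x : Fˣ) : ∃ g ∈ N.comap (SSx F).subtype, g.1 x ≠ 0 := by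
    obtain ⟨g, hg, hgS, hgx⟩ := exists_mem_SSx_apply_ne_zero hψ hψ1 hN hNCb hN0 x
    exact ⟨⟨g, hgS⟩, hg, hgx⟩
  suffices h : (N.comap (SSx F).subtype).mkQ ⟨f, hf⟩ = 0 from
    (Submodule.Quotient.mk_eq_zero (N.comap (SSx F).subtype)).1 h
  refine eq_zero_of_forall_mem_sTwistKer ((sSmooth_SRep hψ).quot hinv) hψ hψ1 fun y => ?_
  obtain ⟨g, hg, hfg⟩ := exists_mem_apply_eq (y := y) hval ⟨f, hf⟩
  have hmem := sTwistKer_le_comap _ (GRep.mkQ_equivariant (SRep ψ hψ) _ hinv)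
    (mem_sTwistKer_SRep hψ hψ1 hfg)
  have hg0 : (N.comap (SSx F).subtype).mkQ g = 0 := (Submodule.Quotient.mk_eq_zero _).2 hg
  rwa [Submodule.mem_comap, map_sub, hg0, sub_zero] at hmem

end FunctionSpaces

section Kirillov

variable {F : Type*} [Field F] {V W : Type*} [AddCommGroup V] [Module ℂ V] [AddCommGroup W]
  [Module ℂ W]

lemma GRep.iso_sub_of_range_eq {ρ : Rep F V} {σ : Rep F W} {f : V →ₗ[ℂ] W}
    (hf : GRep.Equivariant ρ σ f) (hinj : Function.Injective f) {U : Submodule ℂ W}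
    (hU : GRep.Invariant σ U) (hrange : LinearMap.range f = U) :
    GRep.Iso ρ (GRep.sub σ hU) :=
  ⟨(LinearEquiv.ofInjective f hinj).trans (LinearEquiv.ofEq _ _ hrange),
    fun g v => Subtype.ext (hf g v)⟩

/-- The Kirillov map of a functional `l`. It takes values in the functions with the action `repCx`
as soon as `l` is a `ψ`-twisted `S`-invariant functional, that is, kills `sTwistKer ρ ψ`. -/
def kirillovMap (ρ : Rep F V) (l : Module.Dual ℂ V) : V →ₗ[ℂ] (Fˣ → ℂ) :=
  LinearMap.pi fun x => l ∘ₗ ρ (xT x)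

lemma kirillovMap_apply (ρ : Rep F V) (l : Module.Dual ℂ V) (v : V) (x : Fˣ) :
    kirillovMap ρ l v x = l (ρ (xT x) v) := rfl

lemma kirillovMap_apply_one (ρ : Rep F V) (l : Module.Dual ℂ V) (v : V) :
    kirillovMap ρ l v 1 = l v := by
  rw [kirillovMap_apply, ← xTHom_apply, map_one, map_one, Module.End.one_apply]

lemma apply_rho_sS_of_sTwistKer_le_ker {ρ : Rep F V} {θ : AddChar F ℂ} {l : Module.Dual ℂ V}
    (hl : sTwistKer ρ θ ≤ LinearMap.ker l) (b : F) (v : V) : l (ρ (sS b) v) = θ b * l v := by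
  have hker : ρ (sS b) v - θ b • v ∈ LinearMap.ker l := hl (Submodule.subset_span ⟨b, v, rfl⟩)
  rwa [LinearMap.mem_ker, map_sub, map_smul, sub_eq_zero] at hker

end Kirillov

section KirillovModel

variable {F : Type*} [NontriviallyNormedField F] {ψ : AddChar F ℂ} {V : Type*} [AddCommGroup V]
  [Module ℂ V] {ρ : Rep F V}

lemma kirillovMap_equivariant {l : Module.Dual ℂ V} (hl : sTwistKer ρ ψ ≤ LinearMap.ker l) :
    GRep.Equivariant ρ (repCx F ψ) (kirillovMap ρ l) := by
  intro g v
  funext x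
  have hmul : xT x * g = sS (g.s * x) * xT (x * g.t) := by
    ext <;> simp [mul_comm]
  rw [repCx_apply, kirillovMap_apply, kirillovMap_apply, ← apply_rho_sS_of_sTwistKer_le_ker hl,
    ← Module.End.mul_apply, ← Module.End.mul_apply, ← map_mul, ← map_mul, hmul]

lemma isLocallyConstant_kirillovMap (hρ : IsSmoothRep ρ) (l : Module.Dual ℂ V) (v : V) :
    IsLocallyConstant (kirillovMap ρ l v) := by
  refine (IsLocallyConstant.iff_eventually_eq _).2 fun x => ?_
  have hdiv : Filter.Tendsto (fun y : Fˣ => x⁻¹ * y) (nhds x) (nhds 1) := by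
    simpa only [inv_mul_cancel] using (continuous_const_mul x⁻¹).tendsto x
  have hone : ρ (xT 1) v = v := by rw [← xTHom_apply, map_one, map_one, Module.End.one_apply]
  filter_upwards [hdiv.eventually ((hρ.isOpen_setOf_rho_xT_eq v).mem_nhds hone)] with y hy
  rw [kirillovMap_apply, ← mul_inv_cancel_left x y, ← xTHom_apply, map_mul, map_mul,
    Module.End.mul_apply, xTHom_apply, xTHom_apply, hy, kirillovMap_apply]

lemma kirillovMap_mem_Cb [ProperSpace F] (hρ : IsSmoothRep ρ) (hψ1 : ψ ≠ 1) {l : Module.Dual ℂ V}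
    (hl : sTwistKer ρ ψ ≤ LinearMap.ker l) (v : V) : kirillovMap ρ l v ∈ Cb F := by
  refine ⟨isLocallyConstant_kirillovMap hρ l v, ?_⟩
  obtain ⟨c, hc⟩ := AddChar.ne_one_iff.1 hψ1
  obtain ⟨δ, hδ, hvδ⟩ := Metric.eventually_nhds_iff.1 (hρ.sSmooth v)
  suffices hball : Units.val '' Function.support (kirillovMap ρ l v) ⊆
      Metric.closedBall 0 (‖c‖ / δ) from
    (Metric.isBounded_closedBall.subset hball).isCompact_closure
  rintro _ ⟨x, hx, rfl⟩
  rw [mem_closedBall_zero_iff]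
  by_contra! hlt
  have hfix : ρ (sS (c / x)) v = v := hvδ <| by
    rwa [dist_zero_right, norm_div, div_lt_comm₀ (norm_pos_iff.2 x.ne_zero) hδ]
  have hψc := congrFun (kirillovMap_equivariant hl (sS (c / x)) v) x
  rw [hfix, repCx_sS_apply, div_mul_cancel₀ _ x.ne_zero] at hψc
  exact hc (mul_right_cancel₀ hx (by rw [one_mul, ← hψc]))

/-- A Kirillov model of a `TS`-module: an equivariant embedding into `C_b^∞(F^×)`. -/
structure IsKirillovModel (ψ : AddChar F ℂ) (ρ : Rep F V) (k : V →ₗ[ℂ] (Fˣ → ℂ)) : Prop where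
  injective : Function.Injective k
  equivariant : GRep.Equivariant ρ (repCx F ψ) k
  mem_Cb (v : V) : k v ∈ Cb F

namespace IsKirillovModel

variable {k : V →ₗ[ℂ] (Fˣ → ℂ)}

lemma map_le_Cb (hk : IsKirillovModel ψ ρ k) (U : Submodule ℂ V) : U.map k ≤ Cb F := by
  rintro _ ⟨v, -, rfl⟩
  exact hk.mem_Cb v

lemma map_invariant (hk : IsKirillovModel ψ ρ k) {U : Submodule ℂ V}
    (hU : GRep.Invariant ρ U) : GRep.Invariant (repCx F ψ) (U.map k) :=
  GRep.map_invariant ρ _ k hk.equivariant U hU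

lemma map_ne_bot (hk : IsKirillovModel ψ ρ k) {U : Submodule ℂ V} (hU0 : U ≠ ⊥) :
    U.map k ≠ ⊥ := by
  rw [← Submodule.map_bot k]
  exact (Submodule.map_injective_of_injective hk.injective).ne hU0

lemma sCoinvKer_le_comap_SSx (hk : IsKirillovModel ψ ρ k) (hψ : IsLocallyConstant ψ) :
    sCoinvKer ρ ≤ (SSx F).comap k := by
  refine Submodule.span_le.2 ?_
  rintro _ ⟨b, v, rfl⟩
  rw [SetLike.mem_coe, Submodule.mem_comap, map_sub, hk.equivariant]
  exact repCx_sS_sub_mem_SSx hψ (hk.mem_Cb v) b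

lemma sCoinvKer_ne_bot [Nontrivial V] (hk : IsKirillovModel ψ ρ k) (hψ : IsLocallyConstant ψ)
    (hψ1 : ψ ≠ 1) : sCoinvKer ρ ≠ ⊥ := by
  intro hbot
  obtain ⟨c, hc⟩ := AddChar.ne_one_iff.1 hψ1
  obtain ⟨_, ⟨v, -, rfl⟩, -, hv⟩ := exists_mem_SSx_apply_ne_zero hψ hψ1
    (hk.map_invariant (U := ⊤) fun _ _ _ => Submodule.mem_top) (hk.map_le_Cb ⊤)
    (hk.map_ne_bot top_ne_bot) 1
  have hfix : ρ (sS c) v - v ∈ sCoinvKer ρ := Submodule.subset_span ⟨c, v, rfl⟩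
  rw [hbot, Submodule.mem_bot, sub_eq_zero] at hfix
  have hψc := congrFun (hk.equivariant (sS c) v) 1
  rw [hfix, repCx_sS_apply, Units.val_one, mul_one] at hψc
  exact hc (mul_right_cancel₀ hv (by rw [one_mul, ← hψc]))

variable [IsUltrametricDist F] [ProperSpace F]

lemma SSx_le_map (hk : IsKirillovModel ψ ρ k) (hψ : IsLocallyConstant ψ) (hψ1 : ψ ≠ 1)
    {U : Submodule ℂ V} (hU : GRep.Invariant ρ U) (hU0 : U ≠ ⊥) : SSx F ≤ U.map k :=
  SSx_le hψ hψ1 (hk.map_invariant hU) (hk.map_le_Cb U) (hk.map_ne_bot hU0)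

lemma comap_SSx_le (hk : IsKirillovModel ψ ρ k) (hψ : IsLocallyConstant ψ) (hψ1 : ψ ≠ 1)
    {U : Submodule ℂ V} (hU : GRep.Invariant ρ U) (hU0 : U ≠ ⊥) : (SSx F).comap k ≤ U := by
  rw [← Submodule.comap_map_eq_of_injective hk.injective U]
  exact Submodule.comap_mono (hk.SSx_le_map hψ hψ1 hU hU0)

lemma sCoinvKer_le (hk : IsKirillovModel ψ ρ k) (hψ : IsLocallyConstant ψ) (hψ1 : ψ ≠ 1)
    {U : Submodule ℂ V} (hU : GRep.Invariant ρ U) (hU0 : U ≠ ⊥) : sCoinvKer ρ ≤ U :=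
  (hk.sCoinvKer_le_comap_SSx hψ).trans (hk.comap_SSx_le hψ hψ1 hU hU0)

variable [Nontrivial V]

lemma sCoinvKer_eq_comap_SSx (hk : IsKirillovModel ψ ρ k) (hψ : IsLocallyConstant ψ)
    (hψ1 : ψ ≠ 1) : sCoinvKer ρ = (SSx F).comap k :=
  (hk.sCoinvKer_le_comap_SSx hψ).antisymm
    (hk.comap_SSx_le hψ hψ1 (sCoinvKer_invariant ρ) (hk.sCoinvKer_ne_bot hψ hψ1))

lemma map_sCoinvKer (hk : IsKirillovModel ψ ρ k) (hψ : IsLocallyConstant ψ) (hψ1 : ψ ≠ 1) :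
    (sCoinvKer ρ).map k = SSx F :=
  (Submodule.map_le_iff_le_comap.2 (hk.sCoinvKer_le_comap_SSx hψ)).antisymm
    (hk.SSx_le_map hψ hψ1 (sCoinvKer_invariant ρ) (hk.sCoinvKer_ne_bot hψ hψ1))

end IsKirillovModel

end KirillovModel

section Subquotients

variable {F : Type*} [Field F] {V : Type*} [AddCommGroup V] [Module ℂ V]

lemma sTwistKer_quot (ρ : Rep F V) (θ : AddChar F ℂ) {U : Submodule ℂ V}
    (hU : GRep.Invariant ρ U) :
    sTwistKer (GRep.quot ρ U hU) θ = (sTwistKer ρ θ).map U.mkQ := by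
  refine le_antisymm (Submodule.span_le.2 ?_) (Submodule.map_le_iff_le_comap.2
    (sTwistKer_le_comap θ (GRep.mkQ_equivariant ρ U hU)))
  rintro _ ⟨b, x, rfl⟩
  obtain ⟨v, rfl⟩ := U.mkQ_surjective x
  exact ⟨ρ (sS b) v - θ b • v, Submodule.subset_span ⟨b, v, rfl⟩, rfl⟩

lemma mem_sup_sTwistKer_of_mkQ_mem_sTwistKer_subquot {ρ : Rep F V} {θ : AddChar F ℂ}
    {A B : Submodule ℂ V} (hA : GRep.Invariant ρ A) (hB : GRep.Invariant ρ B) {x : ↥B}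
    (hx : (A.comap B.subtype).mkQ x ∈ sTwistKer (GRep.subquot ρ hA hB) θ) :
    x.1 ∈ A ⊔ sTwistKer ρ θ := by
  have hinc : GRep.Equivariant (GRep.subquot ρ hA hB) (GRep.quot ρ A hA)
      ((A.comap B.subtype).mapQ A B.subtype le_rfl) := by
    intro g y
    obtain ⟨y, rfl⟩ := (A.comap B.subtype).mkQ_surjective y
    rfl
  rw [← Submodule.comap_map_mkQ, ← sTwistKer_quot ρ θ hA]
  exact sTwistKer_le_comap θ hinc hx

lemma CompSeries.irred_subquot {ρ : Rep F V} (c : CompSeries ρ) {i : ℕ} (hi : i < c.n) :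
    GRep.Irred (GRep.subquot ρ (c.inv i) (c.inv (i + 1))) := by
  refine ⟨Submodule.Quotient.nontrivial_iff.2 ?_, fun U hU => ?_⟩
  · rw [Ne, Submodule.comap_subtype_eq_top]
    exact (c.lt i hi).not_ge
  let q := ((c.W i).comap (c.W (i + 1)).subtype).mkQ
  let C := (U.comap q).map (c.W (i + 1)).subtype
  have hC : GRep.Invariant ρ C := by
    rintro g _ ⟨v, hv, rfl⟩
    exact ⟨GRep.sub ρ (c.inv (i + 1)) g v, hU g _ hv, rfl⟩
  have hcomap : C.comap (c.W (i + 1)).subtype = U.comap q :=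
    Submodule.comap_map_eq_of_injective (c.W (i + 1)).injective_subtype _
  have hle : c.W i ≤ C := by
    have hker : (c.W i).comap (c.W (i + 1)).subtype ≤ U.comap q := Submodule.le_comap_mkQ _ U
    simpa only [Submodule.map_comap_subtype, inf_eq_right.2 (c.lt i hi).le] using
      Submodule.map_mono (f := (c.W (i + 1)).subtype) hker
  have hsurj := Submodule.map_comap_eq_of_surjective (Submodule.mkQ_surjective _) U
  refine (c.maximal i hi C hC hle (Submodule.map_subtype_le _ _)).imp (fun h => ?_) fun h => ?_
  · rw [← hsurj, ← hcomap, h, Submodule.mkQ_map_self]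
  · rw [← hsurj, ← hcomap, h, Submodule.comap_subtype_self, Submodule.map_top, Submodule.range_mkQ]

end Subquotients

section MultiplicityOne

lemma exists_ker_eq_of_sup_span_singleton_eq_top {k V : Type*} [Field k]
    [AddCommGroup V] [Module k V] {p : Submodule k V} {v : V} (h : p ⊔ Submodule.span k {v} = ⊤) :
    ∃ l : Module.Dual k V, LinearMap.ker l = p := by
  by_cases htop : p = ⊤
  · exact ⟨0, by rw [htop, LinearMap.ker_zero]⟩
  have hv : v ∉ p := fun hv => htop (by
    rwa [sup_eq_left.2 ((Submodule.span_singleton_le_iff_mem v p).2 hv)] at h)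
  have hcoatom : p ⋖ ⊤ := by
    simpa only [sup_comm, h] using Submodule.covBy_span_singleton_sup hv
  obtain ⟨l, hl0, hl⟩ := p.exists_le_ker_of_lt_top hcoatom.lt
  exact ⟨l, (hcoatom.eq_or_eq hl le_top).resolve_right (mt LinearMap.ker_eq_top.1 hl0)⟩

variable {F : Type*} [NontriviallyNormedField F] {ψ : AddChar F ℂ} {V : Type*} [AddCommGroup V]
  [Module ℂ V] {ρ : Rep F V}

lemma exists_sTwistKer_SRep_sup_span_eq_top (hψ : IsLocallyConstant ψ) (hψ1 : ψ ≠ 1) :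
    ∃ f, sTwistKer (SRep ψ hψ) ψ ⊔ Submodule.span ℂ {f} = ⊤ := by
  let l : Module.Dual ℂ ↥(SSx F) := LinearMap.proj 1 ∘ₗ (SSx F).subtype
  have hker : LinearMap.ker l ≤ sTwistKer (SRep ψ hψ) ψ := fun f hf => by
    have hmem : f ∈ sTwistKer (SRep ψ hψ) (AddChar.mulShift ψ 1) :=
      mem_sTwistKer_SRep hψ hψ1 fun x hx => by rwa [Units.val_eq_one.1 hx]
    rwa [AddChar.mulShift_one] at hmem
  by_cases hl : LinearMap.ker l = ⊤
  · exact ⟨0, eq_top_mono le_sup_left (eq_top_mono hker hl)⟩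
  · obtain ⟨f, -, hf⟩ := SetLike.exists_of_lt (lt_top_iff_ne_top.2 hl)
    exact ⟨f, eq_top_mono (sup_comm (LinearMap.ker l) _ ▸ sup_le_sup_right hker _)
      (LinearMap.span_singleton_sup_ker_eq_top l hf)⟩

lemma GRep.Iso.exists_sTwistKer_sup_span_eq_top (hψ : IsLocallyConstant ψ) (hψ1 : ψ ≠ 1)
    (hiso : GRep.Iso ρ (SRep ψ hψ)) :
    ∃ v, sTwistKer ρ ψ ⊔ Submodule.span ℂ {v} = ⊤ := by
  obtain ⟨e, he⟩ := hiso
  obtain ⟨f, hf⟩ := exists_sTwistKer_SRep_sup_span_eq_top hψ hψ1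
  have hsymm : GRep.Equivariant (SRep ψ hψ) ρ e.symm.toLinearMap := fun g x =>
    e.injective (by simp [he])
  have hle : (sTwistKer (SRep ψ hψ) ψ).map e.symm.toLinearMap ≤ sTwistKer ρ ψ :=
    Submodule.map_le_iff_le_comap.2 (sTwistKer_le_comap ψ hsymm)
  refine ⟨e.symm f, eq_top_mono (sup_le_sup_right hle _) ?_⟩
  have hmap := congrArg (Submodule.map e.symm.toLinearMap) hf
  rwa [Submodule.map_sup, Submodule.map_span, Set.image_singleton, Submodule.map_top,
    LinearEquiv.range] at hmap

lemma CompSeries.exists_le_sup_sTwistKer_sup_span (hψ : IsLocallyConstant ψ) (hψ1 : ψ ≠ 1)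
    (c : CompSeries ρ) {i : ℕ}
    (hiso : GRep.Iso (GRep.subquot ρ (c.inv i) (c.inv (i + 1))) (SRep ψ hψ)) :
    ∃ v, c.W (i + 1) ≤ c.W i ⊔ (sTwistKer ρ ψ ⊔ Submodule.span ℂ {v}) := by
  obtain ⟨y, hy⟩ := hiso.exists_sTwistKer_sup_span_eq_top hψ hψ1
  obtain ⟨v, rfl⟩ := Submodule.mkQ_surjective _ y
  refine ⟨v, fun x hx => ?_⟩
  let q := ((c.W i).comap (c.W (i + 1)).subtype).mkQ
  obtain ⟨z, hz, w, hw, hzw⟩ := Submodule.mem_sup.1 (hy.ge (Submodule.mem_top (x := q ⟨x, hx⟩)))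
  obtain ⟨a, rfl⟩ := Submodule.mem_span_singleton.1 hw
  have hdiff : q (⟨x, hx⟩ - a • v) ∈ sTwistKer (GRep.subquot ρ (c.inv i) (c.inv (i + 1))) ψ := by
    rwa [map_sub, map_smul, ← hzw, add_sub_cancel_right]
  rw [← sup_assoc, ← sub_add_cancel x (a • v.1)]
  exact Submodule.add_mem_sup (mem_sup_sTwistKer_of_mkQ_mem_sTwistKer_subquot _ _ hdiff)
    (Submodule.smul_mem _ a (Submodule.mem_span_singleton_self v.1))

variable [IsUltrametricDist F] [ProperSpace F]

lemma IsKirillovModel.iso_SRep_of_irred {k : V →ₗ[ℂ] (Fˣ → ℂ)} (hk : IsKirillovModel ψ ρ k)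
    (hψ : IsLocallyConstant ψ) (hψ1 : ψ ≠ 1) (hirr : GRep.Irred ρ) : GRep.Iso ρ (SRep ψ hψ) := by
  have := hirr.1
  have htop : sCoinvKer ρ = ⊤ :=
    (hirr.2 _ (sCoinvKer_invariant ρ)).resolve_left (hk.sCoinvKer_ne_bot hψ hψ1)
  refine GRep.iso_sub_of_range_eq hk.equivariant hk.injective (SSx_invariant ψ hψ) ?_
  rw [LinearMap.range_eq_map, ← htop, hk.map_sCoinvKer hψ hψ1]

lemma sTwistKer_eq_top_or_iso_SRep (hψ : IsLocallyConstant ψ) (hψ1 : ψ ≠ 1)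
    (hρ : IsSmoothRep ρ) (hirr : GRep.Irred ρ) :
    sTwistKer ρ ψ = ⊤ ∨ GRep.Iso ρ (SRep ψ hψ) := by
  refine or_iff_not_imp_left.2 fun htop => ?_
  obtain ⟨l, hl0, hl⟩ := Submodule.exists_le_ker_of_lt_top _ (lt_top_iff_ne_top.2 htop)
  have heq := kirillovMap_equivariant hl
  have hker : LinearMap.ker (kirillovMap ρ l) = ⊥ := by
    refine (hirr.2 _ (GRep.ker_invariant _ _ _ heq)).resolve_right fun hzero => hl0 ?_
    ext v
    rw [← kirillovMap_apply_one ρ, LinearMap.ker_eq_top.1 hzero]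
    rfl
  have hk : IsKirillovModel ψ ρ (kirillovMap ρ l) :=
    ⟨LinearMap.ker_eq_bot.1 hker, heq, kirillovMap_mem_Cb hρ hψ1 hl⟩
  exact hk.iso_SRep_of_irred hψ hψ1 hirr

lemma CompSeries.le_sup_sTwistKer (hψ : IsLocallyConstant ψ) (hψ1 : ψ ≠ 1)
    (hρ : IsSmoothRep ρ) (c : CompSeries ρ) {i : ℕ} (hi : i < c.n)
    (hiso : ¬ GRep.Iso (GRep.subquot ρ (c.inv i) (c.inv (i + 1))) (SRep ψ hψ)) :
    c.W (i + 1) ≤ c.W i ⊔ sTwistKer ρ ψ := by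
  have htop : sTwistKer (GRep.subquot ρ (c.inv i) (c.inv (i + 1))) ψ = ⊤ :=
    (sTwistKer_eq_top_or_iso_SRep hψ hψ1 ((hρ.sub (c.inv (i + 1))).quot _)
      (c.irred_subquot hi)).resolve_right hiso
  exact fun x hx => mem_sup_sTwistKer_of_mkQ_mem_sTwistKer_subquot (x := ⟨x, hx⟩) (c.inv i)
    (c.inv (i + 1)) (htop.ge Submodule.mem_top)

/-- A step of the composition series enlarges `sTwistKer ρ ψ` only if it is isomorphic to `𝕊`, and
then by at most one dimension. -/
theorem CompSeries.exists_ker_eq_sTwistKer (hψ : IsLocallyConstant ψ) (hψ1 : ψ ≠ 1)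
    (hρ : IsSmoothRep ρ) (c : CompSeries ρ) (hdeg : c.deg (SRep ψ hψ) = 1) :
    ∃ l : Module.Dual ℂ V, LinearMap.ker l = sTwistKer ρ ψ := by
  obtain ⟨i₀, hi₀⟩ := Finset.card_eq_one.1 hdeg
  have hiff (i : Fin c.n) :
      GRep.Iso (GRep.subquot ρ (c.inv i.1) (c.inv (i.1 + 1))) (SRep ψ hψ) ↔ i = i₀ := by
    simpa using Finset.ext_iff.1 hi₀ i
  obtain ⟨v, hv⟩ := c.exists_le_sup_sTwistKer_sup_span hψ hψ1 ((hiff i₀).2 rfl)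
  have hle (i : ℕ) (hi : i ≤ c.n) : c.W i ≤ sTwistKer ρ ψ ⊔ Submodule.span ℂ {v} := by
    induction i with
    | zero => exact c.bot.trans_le bot_le
    | succ i ih =>
      specialize ih (Nat.le_of_succ_le hi)
      by_cases h : i = i₀
      · subst h
        exact hv.trans (sup_le ih le_rfl)
      · refine (c.le_sup_sTwistKer hψ hψ1 hρ hi fun hiso => h ?_).trans (sup_le ih le_sup_left)
        exact congrArg Fin.val ((hiff ⟨i, hi⟩).1 hiso)
  exact exists_ker_eq_of_sup_span_singleton_eq_top
    (eq_top_iff.2 (c.top.symm.trans_le (hle _ le_rfl)))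

end MultiplicityOne

section Eigencharacters

variable {k G V : Type*} [Field k] [IsAlgClosed k] [CommGroup G] [AddCommGroup V] [Module k V]

lemma exists_common_eigenvector [FiniteDimensional k V] [Nontrivial V]
    (τ : Representation k G V) :
    ∃ (χ : G →* kˣ) (v : V), v ≠ 0 ∧ ∀ g, τ g v = (χ g : k) • v := by
  have : IsArtinian (MonoidAlgebra k G) τ.asModule := isArtinian_of_tower k inferInstance
  have : Nontrivial τ.asModule := ‹Nontrivial V›
  obtain ⟨m, hm⟩ := IsAtomic.exists_atom (Submodule (MonoidAlgebra k G) τ.asModule)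
  have : IsSimpleModule (MonoidAlgebra k G) m := isSimpleModule_iff_isAtom.2 hm
  have : FiniteDimensional k m := inferInstanceAs (FiniteDimensional k (m.restrictScalars k))
  obtain ⟨v, hv, hspan⟩ := finrank_eq_one_iff'.1
    (IsSimpleModule.finrank_eq_one_of_isMulCommutative (MonoidAlgebra k G) m k)
  have hv0 : τ.asModuleEquiv v.1 ≠ 0 := by simpa using hv
  have hscalar (g : G) : ∃ c : k, τ g (τ.asModuleEquiv v) = c • τ.asModuleEquiv v := by
    obtain ⟨c, hc⟩ := hspan (MonoidAlgebra.of k G g • v)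
    refine ⟨c, ?_⟩
    rw [← map_smul, ← Submodule.coe_smul_of_tower, hc, Submodule.coe_smul,
      Representation.asModuleEquiv_map_smul, Representation.asAlgebraHom_of]
  choose c hc using hscalar
  have hinj : Function.Injective fun a : k => a • τ.asModuleEquiv v.1 := smul_left_injective k hv0
  refine ⟨MonoidHom.toHomUnits ⟨⟨c, hinj ?_⟩, fun g h => hinj ?_⟩, _, hv0, hc⟩
  · simp only [← hc, map_one, Module.End.one_apply, one_smul]
  · simp only
    rw [← hc, map_mul, Module.End.mul_apply, hc h, map_smul, hc g, smul_smul, mul_comm]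

end Eigencharacters

section ExistenceOfKirillovModel

variable {F : Type*} [NontriviallyNormedField F] {ψ : AddChar F ℂ} {V : Type*} [AddCommGroup V]
  [Module ℂ V] {ρ : Rep F V}

lemma smoothMulChar_of_mem_tEigen (hρ : IsSmoothRep ρ) {χ : Fˣ →* ℂˣ} {v : V}
    (hv : v ∈ tEigen ρ χ) (hv0 : v ≠ 0) : SmoothMulChar χ := by
  have hstab : {u : Fˣ | χ u = 1} = {u | ρ (xT u) v = v} := by
    ext u
    have hu : ρ (xT u) v = (χ u : ℂ) • v := hv u
    rw [Set.mem_ofPred_eq, Set.mem_ofPred_eq, hu]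
    exact Units.val_eq_one.symm.trans ((smul_left_injective ℂ hv0).eq_iff' (one_smul ℂ v)).symm
  rw [SmoothMulChar, hstab]
  exact hρ.isOpen_setOf_rho_xT_eq v

lemma Perfect.eq_bot_of_finite (hρ : IsSmoothRep ρ) (hperf : Perfect ρ) {U : Submodule ℂ V}
    (hU : GRep.Invariant ρ U) [Module.Finite ℂ U] : U = ⊥ := by
  by_contra hne
  have := Submodule.nontrivial_iff_ne_bot.2 hne
  obtain ⟨χ, v, hv0, hv⟩ := exists_common_eigenvector ((GRep.sub ρ hU).comp xTHom)
  have hmem : v.1 ∈ tEigen ρ χ := fun u => congrArg Subtype.val (hv u)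
  have hv0' : v.1 ≠ 0 := Subtype.coe_ne_coe.2 hv0
  rw [hperf χ (smoothMulChar_of_mem_tEigen hρ hmem hv0')] at hmem
  exact hv0' hmem

variable [IsUltrametricDist F] [ProperSpace F]

lemma Perfect.sInv_eq_bot (hψ : IsLocallyConstant ψ) (hψ1 : ψ ≠ 1) (hρ : IsSmoothRep ρ)
    (hperf : Perfect ρ) [Module.Finite ℂ (V ⧸ sCoinvKer ρ)] : sInv ρ = ⊥ := by
  have hinj : Function.Injective ((sCoinvKer ρ).mkQ ∘ₗ (sInv ρ).subtype) := by
    rw [← LinearMap.ker_eq_bot, LinearMap.ker_comp, Submodule.ker_mkQ,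
      ← Submodule.disjoint_iff_comap_eq_bot]
    exact disjoint_sInv_sCoinvKer hρ.sSmooth hψ hψ1
  have := Module.Finite.of_injective _ hinj
  exact hperf.eq_bot_of_finite hρ (sInv_invariant ρ)

lemma disjoint_ker_kirillovMap_sCoinvKer (hψ : IsLocallyConstant ψ) (hψ1 : ψ ≠ 1)
    (hρ : SSmooth ρ) {l : Module.Dual ℂ V} (hl : LinearMap.ker l ≤ sTwistKer ρ ψ) :
    Disjoint (LinearMap.ker (kirillovMap ρ l)) (sCoinvKer ρ) := by
  refine Submodule.disjoint_def.2 fun v hker hv =>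
    eq_zero_of_forall_mem_sTwistKer hρ hψ hψ1 fun y => ?_
  by_cases hy : y = 0
  · rwa [hy, AddChar.mulShift_zero, sTwistKer_one]
  · have htwist : ρ (xT (Units.mk0 y hy)) v ∈ sTwistKer ρ ψ := hl (congrFun hker _)
    rw [← AddChar.mulShift_one ψ, ← inv_mul_cancel₀ hy] at htwist
    have huntwist := rho_xT_mem_sTwistKer ρ ψ (Units.mk0 y hy)⁻¹ y htwist
    rwa [← Module.End.mul_apply, ← xTHom_apply, ← xTHom_apply, ← map_mul, ← map_mul,
      inv_mul_cancel, map_one, map_one, Module.End.one_apply] at huntwist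

theorem exists_isKirillovModel (hψ : IsLocallyConstant ψ) (hψ1 : ψ ≠ 1) (hρ : IsSmoothRep ρ)
    (hperf : Perfect ρ) [Module.Finite ℂ (V ⧸ sCoinvKer ρ)] (c : CompSeries ρ)
    (hdeg : c.deg (SRep ψ hψ) = 1) : ∃ k, IsKirillovModel ψ ρ k := by
  obtain ⟨l, hl⟩ := c.exists_ker_eq_sTwistKer hψ hψ1 hρ hdeg
  have heq := kirillovMap_equivariant hl.ge
  have hdisj := disjoint_ker_kirillovMap_sCoinvKer hψ hψ1 hρ.sSmooth hl.le
  have hinv : LinearMap.ker (kirillovMap ρ l) ≤ sInv ρ := fun v hv b =>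
    sub_eq_zero.1 (Submodule.disjoint_def.1 hdisj _
      (Submodule.sub_mem _ (GRep.ker_invariant _ _ _ heq _ v hv) hv)
      (Submodule.subset_span ⟨b, v, rfl⟩))
  refine ⟨kirillovMap ρ l, LinearMap.ker_eq_bot.1 ?_, heq, kirillovMap_mem_Cb hρ hψ1 hl.ge⟩
  rwa [hperf.sInv_eq_bot hψ hψ1 hρ, le_bot_iff] at hinv

end ExistenceOfKirillovModel

section DegreeOne

variable {F : Type*} [Field F] {V : Type*} [AddCommGroup V] [Module ℂ V] {ρ : Rep F V}

lemma exists_maximal_chain_of_finite_quotient {A : Submodule ℂ V} (hA : GRep.Invariant ρ A)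
    [Module.Finite ℂ (V ⧸ A)] :
    ∃ (U : ℕ → Submodule ℂ V) (n : ℕ), U 0 = A ∧ U n = ⊤ ∧ (∀ i, A ≤ U i) ∧
      (∀ i, GRep.Invariant ρ (U i)) ∧ ∀ i < n, U i < U (i + 1) ∧
        ∀ C, GRep.Invariant ρ C → U i ≤ C → C ≤ U (i + 1) → C = U i ∨ C = U (i + 1) := by
  let e := (Submodule.comapMkQRelIso A).symm.toOrderEmbedding
  have : WellFoundedLT (Set.Ici A) := e.wellFoundedLT
  have : WellFoundedGT (Set.Ici A) := e.wellFoundedGT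
  let L := {U : Set.Ici A // GRep.Invariant ρ U.1}
  let bot : L := ⟨⟨A, Set.self_mem_Ici⟩, hA⟩
  let top : L := ⟨⟨⊤, Set.mem_Ici.2 le_top⟩, fun _ _ _ => trivial⟩
  obtain ⟨U, h0, n, hn, hcov⟩ := exists_covBy_seq_of_wellFoundedLT_wellFoundedGT_of_le
    (show bot ≤ top from le_top (a := A))
  refine ⟨fun i => (U i).1.1, n, congrArg (fun W : L => W.1.1) h0, congrArg (fun W : L => W.1.1) hn,
    fun i => (U i).1.2, fun i => (U i).2, fun i hi => ⟨(hcov i hi).lt, fun C hC h₁ h₂ => ?_⟩⟩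
  exact ((hcov i hi).eq_or_eq (c := ⟨⟨C, (U i).1.2.trans h₁⟩, hC⟩) h₁ h₂).imp
    (congrArg fun W : L => W.1.1) (congrArg fun W : L => W.1.1)

lemma CompSeries.exists_of_minimal {A : Submodule ℂ V} (hA : GRep.Invariant ρ A) (hA0 : A ≠ ⊥)
    (hmin : ∀ C, GRep.Invariant ρ C → C ≤ A → C = ⊥ ∨ C = A) [Module.Finite ℂ (V ⧸ A)] :
    ∃ c : CompSeries ρ, 0 < c.n ∧ c.W 1 = A ∧ ∀ i, A ≤ c.W (i + 1) := by
  obtain ⟨U, n, rfl, hn, hle, hinv, hcov⟩ := exists_maximal_chain_of_finite_quotient hA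
  refine ⟨{ n := n + 1, W := fun i => i.casesOn ⊥ U, bot := rfl, top := hn, inv := ?_, lt := ?_,
            maximal := ?_ }, n.succ_pos, rfl, hle⟩
  · rintro (_ | i)
    · exact fun g v hv => by rw [(Submodule.mem_bot ℂ).1 hv, map_zero]; exact Submodule.zero_mem _
    · exact hinv i
  · rintro (_ | i) hi
    · exact bot_lt_iff_ne_bot.2 hA0
    · exact (hcov i (Nat.lt_of_succ_lt_succ hi)).1
  · rintro (_ | i) hi C hC h₁ h₂
    · exact hmin C hC h₂
    · exact (hcov i (Nat.lt_of_succ_lt_succ hi)).2 C hC h₁ h₂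

lemma CompSeries.deg_eq_one {W : Type*} [AddCommGroup W] [Module ℂ W] {σ : Rep F W}
    (c : CompSeries ρ) (hn : 0 < c.n) (h0 : GRep.Iso (GRep.subquot ρ (c.inv 0) (c.inv 1)) σ)
    (hsucc : ∀ i, ¬ GRep.Iso (GRep.subquot ρ (c.inv (i + 1)) (c.inv (i + 2))) σ) :
    c.deg σ = 1 := by
  refine Finset.card_eq_one.2 ⟨⟨0, hn⟩, Finset.ext ?_⟩
  rintro ⟨_ | i, hi⟩
  · simpa using h0
  · simpa using hsucc i

end DegreeOne

section DegreeOneKirillov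

variable {F : Type*} [NontriviallyNormedField F] {ψ : AddChar F ℂ} {V : Type*} [AddCommGroup V]
  [Module ℂ V] {ρ : Rep F V} {A B : Submodule ℂ V}

lemma not_iso_SRep_subquot [Nontrivial ↥(SSx F)] (hψ : IsLocallyConstant ψ) (hψ1 : ψ ≠ 1)
    (hA : GRep.Invariant ρ A) (hB : GRep.Invariant ρ B) (hle : sCoinvKer ρ ≤ A) :
    ¬ GRep.Iso (GRep.subquot ρ hA hB) (SRep ψ hψ) := by
  rintro ⟨e, he⟩
  have htriv : sCoinvKer (GRep.subquot ρ hA hB) ≤ ⊥ := by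
    refine Submodule.span_le.2 ?_
    rintro _ ⟨b, x, rfl⟩
    obtain ⟨v, rfl⟩ := Submodule.mkQ_surjective _ x
    exact (Submodule.Quotient.mk_eq_zero _).2 (hle (Submodule.subset_span ⟨b, v.1, rfl⟩))
  have hsymm : GRep.Equivariant (SRep ψ hψ) (GRep.subquot ρ hA hB) e.symm.toLinearMap :=
    fun g x => e.injective (by simp [he])
  have htop := (sCoinvKer_le_comap _ _ _ hsymm).trans (Submodule.comap_mono htriv)
  rw [sCoinvKer_SRep hψ hψ1, top_le_iff, Submodule.comap_bot,
    LinearEquiv.ker] at htop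
  exact bot_ne_top htop

namespace IsKirillovModel

variable [IsUltrametricDist F] [ProperSpace F] [Nontrivial V] {k : V →ₗ[ℂ] (Fˣ → ℂ)}

lemma nontrivial_SSx (hk : IsKirillovModel ψ ρ k) (hψ : IsLocallyConstant ψ) (hψ1 : ψ ≠ 1) :
    Nontrivial ↥(SSx F) := by
  rw [Submodule.nontrivial_iff_ne_bot, ← hk.map_sCoinvKer hψ hψ1]
  exact hk.map_ne_bot (hk.sCoinvKer_ne_bot hψ hψ1)

lemma iso_SRep_subquot (hk : IsKirillovModel ψ ρ k) (hψ : IsLocallyConstant ψ) (hψ1 : ψ ≠ 1)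
    (hA : GRep.Invariant ρ A) (hB : GRep.Invariant ρ B) (hA0 : A = ⊥) (hBS : B = sCoinvKer ρ) :
    GRep.Iso (GRep.subquot ρ hA hB) (SRep ψ hψ) := by
  have hker : A.comap B.subtype = LinearMap.ker (k ∘ₗ B.subtype) := by
    rw [LinearMap.ker_comp, LinearMap.ker_eq_bot.2 hk.injective, hA0]
  refine GRep.iso_sub_of_range_eq (σ := repCx F ψ)
    (f := (A.comap B.subtype).liftQ (k ∘ₗ B.subtype) hker.le) ?_
    (LinearMap.ker_eq_bot.1 (Submodule.ker_liftQ_eq_bot _ _ _ hker.ge)) (SSx_invariant ψ hψ) ?_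
  · intro g x
    obtain ⟨v, rfl⟩ := Submodule.mkQ_surjective _ x
    exact hk.equivariant g v
  · rw [Submodule.range_liftQ, LinearMap.range_comp, Submodule.range_subtype, hBS,
      hk.map_sCoinvKer hψ hψ1]

theorem exists_compSeries_deg_eq_one [Module.Finite ℂ (V ⧸ sCoinvKer ρ)]
    (hk : IsKirillovModel ψ ρ k) (hψ : IsLocallyConstant ψ) (hψ1 : ψ ≠ 1) :
    ∃ c : CompSeries ρ, c.deg (SRep ψ hψ) = 1 := by
  have := hk.nontrivial_SSx hψ hψ1
  obtain ⟨c, hn, hc1, hle⟩ := CompSeries.exists_of_minimal (sCoinvKer_invariant ρ)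
    (hk.sCoinvKer_ne_bot hψ hψ1) fun C hC hCle => or_iff_not_imp_left.2 fun hC0 =>
      hCle.antisymm (hk.sCoinvKer_le hψ hψ1 hC hC0)
  exact ⟨c, c.deg_eq_one hn (hk.iso_SRep_subquot hψ hψ1 _ _ c.bot hc1)
    fun i => not_iso_SRep_subquot hψ hψ1 _ _ (hle i)⟩

end IsKirillovModel

end DegreeOneKirillov

section Coinvariants

lemma injective_mkQ_comp_iff_disjoint {R M N : Type*} [Ring R] [AddCommGroup M] [Module R M]
    [AddCommGroup N] [Module R N] {f : M →ₗ[R] N} (hf : Function.Injective f)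
    {p : Submodule R N} : Function.Injective (p.mkQ ∘ₗ f) ↔ Disjoint (LinearMap.range f) p := by
  rw [← LinearMap.ker_eq_bot, LinearMap.ker_comp, Submodule.ker_mkQ, disjoint_iff,
    ← Submodule.map_comap_eq, ← Submodule.map_bot f,
    (Submodule.map_injective_of_injective hf).eq_iff]

lemma GRep.Equivariant.exists_lift {G P M W : Type*} [Group G] [AddCommGroup P] [Module ℂ P]
    [AddCommGroup M] [Module ℂ M] [AddCommGroup W] [Module ℂ W] {ρ : Representation ℂ G P}
    {σ : Representation ℂ G M} {τ : Representation ℂ G W} {i : P →ₗ[ℂ] M} {f : W →ₗ[ℂ] M}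
    (hf : GRep.Equivariant τ σ f) (hi : GRep.Equivariant ρ σ i) (hinj : Function.Injective i)
    (hrange : LinearMap.range f ≤ LinearMap.range i) :
    ∃ g : W →ₗ[ℂ] P, GRep.Equivariant τ ρ g ∧ i ∘ₗ g = f := by
  let g := (LinearEquiv.ofInjective i hinj).symm.toLinearMap ∘ₗ
    f.codRestrict (LinearMap.range i) fun w => hrange ⟨w, rfl⟩
  have hg (w : W) : i (g w) = f w :=
    congrArg Subtype.val ((LinearEquiv.ofInjective i hinj).apply_symm_apply _)
  exact ⟨g, fun a w => hinj (by rw [hg, hi, hg, hf]), LinearMap.ext hg⟩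

variable {F : Type*} [Field F] {V W X : Type*} [AddCommGroup V] [Module ℂ V] [AddCommGroup W]
  [Module ℂ W] [AddCommGroup X] [Module ℂ X] {ρ : Rep F V} {σ : Rep F W}
  {τ : Representation ℂ Fˣ X} {π : V →ₗ[ℂ] X}

/-- The map `π` exhibits the `T`-module `X` as the `S`-coinvariants of a `TS`-module. -/
structure IsSCoinvariants (ρ : Rep F V) (τ : Representation ℂ Fˣ X) (π : V →ₗ[ℂ] X) : Prop where
  surjective : Function.Surjective π
  ker_eq : LinearMap.ker π = sCoinvKer ρ
  map_rho_xT (u : Fˣ) (v : V) : π (ρ (xT u) v) = τ u (π v)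

lemma exists_isSCoinvariants (hiso : GRep.Iso (piZeroT ρ) τ) : ∃ π, IsSCoinvariants ρ τ π := by
  obtain ⟨e, he⟩ := hiso
  refine ⟨e.toLinearMap ∘ₗ (sCoinvKer ρ).mkQ, e.surjective.comp (Submodule.mkQ_surjective _),
    ?_, fun u v => he u ((sCoinvKer ρ).mkQ v)⟩
  rw [LinearEquiv.ker_comp, Submodule.ker_mkQ]

namespace IsSCoinvariants

lemma iso (hπ : IsSCoinvariants ρ τ π) : GRep.Iso (piZeroT ρ) τ := by
  refine ⟨(Submodule.quotEquivOfEq _ _ hπ.ker_eq.symm).trans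
    (π.quotKerEquivOfSurjective hπ.surjective), fun u x => ?_⟩
  obtain ⟨v, rfl⟩ := Submodule.mkQ_surjective _ x
  exact hπ.map_rho_xT u v

lemma finite [Module.Finite ℂ X] (hπ : IsSCoinvariants ρ τ π) :
    Module.Finite ℂ (V ⧸ sCoinvKer ρ) :=
  let ⟨e, _⟩ := hπ.iso
  Module.Finite.equiv e.symm

lemma map_rho (hπ : IsSCoinvariants ρ τ π) (g : Aff F) (v : V) : π (ρ g v) = τ g.t (π v) := by
  have hker : ρ (sS g.s) (ρ (xT g.t) v) - ρ (xT g.t) v ∈ LinearMap.ker π := by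
    rw [hπ.ker_eq]
    exact Submodule.subset_span ⟨g.s, _, rfl⟩
  have hg : sS g.s * xT g.t = g := by ext <;> simp
  rwa [LinearMap.mem_ker, map_sub, sub_eq_zero, hπ.map_rho_xT, ← Module.End.mul_apply, ← map_mul,
    hg] at hker

lemma comap_invariant (hπ : IsSCoinvariants ρ τ π) {Y : Submodule ℂ X}
    (hY : GRep.Invariant τ Y) : GRep.Invariant ρ (Y.comap π) := fun g v hv => by
  rw [Submodule.mem_comap, hπ.map_rho]
  exact hY g.t _ hv

lemma exists_map_sInv (hπ : IsSCoinvariants ρ τ π) {φ : V →ₗ[ℂ] W}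
    (hφ : GRep.Equivariant ρ σ φ) (hle : sCoinvKer ρ ≤ LinearMap.ker φ) :
    ∃ θ : X →ₗ[ℂ] ↥(sInv σ), GRep.Equivariant τ (sInvT σ) θ ∧ ∀ v, (θ (π v) : W) = φ v := by
  have hinv (v : V) : φ v ∈ sInv σ := fun b => by
    rw [← hφ, ← sub_eq_zero, ← map_sub]
    exact hle (Submodule.subset_span ⟨b, v, rfl⟩)
  obtain ⟨s, hs⟩ := π.exists_rightInverse_of_surjective (LinearMap.range_eq_top.2 hπ.surjective)
  have hsπ (v : V) : φ (s (π v)) = φ v := by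
    have hker : s (π v) - v ∈ LinearMap.ker π := by
      rw [LinearMap.mem_ker, map_sub, ← LinearMap.comp_apply π, hs, LinearMap.id_apply, sub_self]
    rw [hπ.ker_eq] at hker
    exact sub_eq_zero.1 ((map_sub φ _ _).symm.trans (hle hker))
  refine ⟨φ.codRestrict (sInv σ) hinv ∘ₗ s, fun u x => Subtype.ext ?_, hsπ⟩
  obtain ⟨v, rfl⟩ := hπ.surjective x
  rw [← hπ.map_rho_xT]
  exact (hsπ _).trans ((hφ _ v).trans (congrArg (σ (xT u)) (hsπ v).symm))

end IsSCoinvariants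

end Coinvariants

section Submodules

variable {F : Type*} [NontriviallyNormedField F] {ψ : AddChar F ℂ} {V W X : Type*}
  [AddCommGroup V] [Module ℂ V] [AddCommGroup W] [Module ℂ W] [AddCommGroup X] [Module ℂ X]
  {ρ : Rep F V} {σ : Rep F W} {τ : Representation ℂ Fˣ X} {k : V →ₗ[ℂ] (Fˣ → ℂ)}
  {π : V →ₗ[ℂ] X} {Y : Submodule ℂ X}

namespace IsKirillovModel

lemma comp (hk : IsKirillovModel ψ ρ k) {f : W →ₗ[ℂ] V} (hf : GRep.Equivariant σ ρ f)
    (hinj : Function.Injective f) : IsKirillovModel ψ σ (k ∘ₗ f) :=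
  ⟨hk.injective.comp hinj, fun g w => (congrArg k (hf g w)).trans (hk.equivariant g _),
    fun w => hk.mem_Cb (f w)⟩

variable [IsUltrametricDist F] [ProperSpace F]

lemma comap_sCoinvKer [Nontrivial W] (hk : IsKirillovModel ψ ρ k) (hψ : IsLocallyConstant ψ)
    (hψ1 : ψ ≠ 1) {f : W →ₗ[ℂ] V} (hf : GRep.Equivariant σ ρ f) (hinj : Function.Injective f) :
    (sCoinvKer ρ).comap f = sCoinvKer σ := by
  have := hinj.nontrivial
  rw [hk.sCoinvKer_eq_comap_SSx hψ hψ1, (hk.comp hf hinj).sCoinvKer_eq_comap_SSx hψ hψ1,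
    Submodule.comap_comp]

lemma piZeroT_iso [Nontrivial W] (hk : IsKirillovModel ψ ρ k) (hψ : IsLocallyConstant ψ)
    (hψ1 : ψ ≠ 1) (hπ : IsSCoinvariants ρ τ π) (hY : GRep.Invariant τ Y) {f : W →ₗ[ℂ] V}
    (hf : GRep.Equivariant σ ρ f) (hinj : Function.Injective f)
    (hrange : LinearMap.range f = Y.comap π) : GRep.Iso (piZeroT σ) (GRep.sub τ hY) := by
  have hmem (w : W) : (π ∘ₗ f) w ∈ Y := hrange.le ⟨w, rfl⟩
  refine IsSCoinvariants.iso (π := (π ∘ₗ f).codRestrict Y hmem) ⟨?_, ?_, fun u w => ?_⟩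
  · rintro ⟨y, hy⟩
    obtain ⟨v, rfl⟩ := hπ.surjective y
    obtain ⟨w, rfl⟩ := hrange.ge hy
    exact ⟨w, rfl⟩
  · rw [LinearMap.ker_codRestrict, LinearMap.ker_comp, hπ.ker_eq,
      hk.comap_sCoinvKer hψ hψ1 hf hinj]
  · exact Subtype.ext ((congrArg π (hf _ w)).trans (hπ.map_rho_xT u _))

theorem exists_submodule_Cb [Module.Finite ℂ X] (hk : IsKirillovModel ψ ρ k)
    (hψ : IsLocallyConstant ψ) (hψ1 : ψ ≠ 1) (hπ : IsSCoinvariants ρ τ π)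
    (hY : GRep.Invariant τ Y) (hY0 : Y.comap π ≠ ⊥) :
    ∃ (E : Submodule ℂ (Fˣ → ℂ)) (hE : GRep.Invariant (repCx F ψ) E), E ≤ Cb F ∧
      (∃ c : CompSeries (GRep.sub (repCx F ψ) hE), c.deg (SRep ψ hψ) = 1) ∧
      GRep.Iso (piZeroT (GRep.sub (repCx F ψ) hE)) (GRep.sub τ hY) ∧
      ∃ f : ↥E →ₗ[ℂ] V, Function.Injective f ∧ GRep.Equivariant (GRep.sub (repCx F ψ) hE) ρ f ∧
        LinearMap.range f = Y.comap π := by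
  let E := (Y.comap π).map k
  have hE : GRep.Invariant (repCx F ψ) E := hk.map_invariant (hπ.comap_invariant hY)
  have : Nontrivial ↥E := Submodule.nontrivial_iff_ne_bot.2 (hk.map_ne_bot hY0)
  let e := Submodule.equivMapOfInjective k hk.injective (Y.comap π)
  let f : ↥E →ₗ[ℂ] V := (Y.comap π).subtype ∘ₗ e.symm.toLinearMap
  have hkf (y : ↥E) : k (f y) = y := congrArg Subtype.val (e.apply_symm_apply y)
  have hf : GRep.Equivariant (GRep.sub (repCx F ψ) hE) ρ f := fun g y =>
    hk.injective (by rw [hkf, hk.equivariant, hkf, GRep.sub_apply])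
  have hinj : Function.Injective f := Subtype.val_injective.comp e.symm.injective
  have hrange : LinearMap.range f = Y.comap π := by
    rw [LinearEquiv.range_comp, Submodule.range_subtype]
  have hiso := hk.piZeroT_iso hψ hψ1 hπ hY hf hinj hrange
  obtain ⟨πY, hπY⟩ := exists_isSCoinvariants hiso
  have := hπY.finite
  exact ⟨E, hE, hk.map_le_Cb _, (hk.comp hf hinj).exists_compSeries_deg_eq_one hψ hψ1, hiso,
    f, hinj, hf, hrange⟩

end IsKirillovModel

end Submodules

theorem statement15_general (ψ : AddChar K ℂ) (hψlc : IsLocallyConstant (⇑ψ)) (hψne : ψ ≠ 1)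
    {X EX P M : Type*} [AddCommGroup X] [Module ℂ X] [Module.Finite ℂ X]
    [AddCommGroup EX] [Module ℂ EX] [AddCommGroup P] [Module ℂ P]
    [AddCommGroup M] [Module ℂ M]
    (τX : Representation ℂ Kˣ X) (ρE : Rep K EX) (hρE : IsSmoothRep ρE) (cE : CompSeries ρE)
    (hEdeg : cE.deg (SRep ψ hψlc) = 1) (hEperf : Perfect ρE)
    (hEpi0 : GRep.Iso (piZeroT ρE) τX) (ρP : Rep K P) (ρM : Rep K M)
    (i : P →ₗ[ℂ] M) (hi : GRep.Equivariant ρP ρM i) (hiinj : Function.Injective i)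
    (j : EX →ₗ[ℂ] M) (hj : GRep.Equivariant ρE ρM j) (hjinj : Function.Injective j) :
    (Function.Injective ((LinearMap.range i).mkQ.comp j) ∧
      Function.Injective ((LinearMap.range j).mkQ.comp i)) ∨
    (∃ (ψm : X →ₗ[ℂ] ↥(sInv (GRep.quot ρM (LinearMap.range i)
          (GRep.range_invariant ρP ρM i hi))))
       (hψm : GRep.Equivariant τX
          (sInvT (GRep.quot ρM (LinearMap.range i) (GRep.range_invariant ρP ρM i hi))) ψm),
      ∃ (EY : Submodule ℂ (Kˣ → ℂ)) (hEY : GRep.Invariant (repCx K ψ) EY),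
        EY ≤ Cb K ∧
        (∃ cY : CompSeries (GRep.sub (repCx K ψ) hEY), cY.deg (SRep ψ hψlc) = 1) ∧
        GRep.Iso (piZeroT (GRep.sub (repCx K ψ) hEY))
          (GRep.sub τX (GRep.ker_invariant τX
            (sInvT (GRep.quot ρM (LinearMap.range i) (GRep.range_invariant ρP ρM i hi)))
            ψm hψm)) ∧
        ∃ g : ↥EY →ₗ[ℂ] P, Function.Injective g ∧
          GRep.Equivariant (GRep.sub (repCx K ψ) hEY) ρP g) := by
  by_cases hdisj : Disjoint (LinearMap.range j) (LinearMap.range i)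
  · exact Or.inl ⟨(injective_mkQ_comp_iff_disjoint hjinj).2 hdisj,
      (injective_mkQ_comp_iff_disjoint hiinj).2 hdisj.symm⟩
  refine Or.inr ?_
  obtain ⟨π, hπ⟩ := exists_isSCoinvariants hEpi0
  have := hπ.finite
  obtain ⟨k, hk⟩ := exists_isKirillovModel hψlc hψne hρE hEperf cE hEdeg
  let φ := (LinearMap.range i).mkQ ∘ₗ j
  have hφ : GRep.Equivariant ρE (GRep.quot ρM _ (GRep.range_invariant ρP ρM i hi)) φ :=
    fun g v => congrArg (LinearMap.range i).mkQ (hj g v)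
  have hker : LinearMap.ker φ ≠ ⊥ := fun h =>
    hdisj ((injective_mkQ_comp_iff_disjoint hjinj).1 (LinearMap.ker_eq_bot.1 h))
  obtain ⟨θ, hθ, hθπ⟩ := hπ.exists_map_sInv hφ
    (hk.sCoinvKer_le hψlc hψne (GRep.ker_invariant _ _ φ hφ) hker)
  have hcomap : (LinearMap.ker θ).comap π = LinearMap.ker φ :=
    Submodule.ext fun v => by
      rw [Submodule.mem_comap, LinearMap.mem_ker, ← Subtype.coe_inj, hθπ]
      rfl
  obtain ⟨E, hE, hECb, hdeg, hiso, f, hf, hfeq, hrange⟩ :=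
    hk.exists_submodule_Cb hψlc hψne hπ (GRep.ker_invariant _ _ θ hθ) (hcomap ▸ hker)
  have hle : LinearMap.range (j ∘ₗ f) ≤ LinearMap.range i := by
    rw [LinearMap.range_comp, hrange, hcomap, Submodule.map_le_iff_le_comap, LinearMap.ker_comp,
      Submodule.ker_mkQ]
  obtain ⟨g, hg, hig⟩ := GRep.Equivariant.exists_lift
    (fun a y => (congrArg j (hfeq a y)).trans (hj a _)) hi hiinj hle
  have hig_inj : Function.Injective (i ∘ g) := by
    rw [← LinearMap.coe_comp, hig]
    exact hjinj.comp hf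
  exact ⟨θ, hθ, E, hE, hECb, hdeg, hiso, g, hig_inj.of_comp, hg⟩

theorem statement15
    (hchar : (2 : K) ≠ 0)
    (ψ : AddChar K ℂ) (hψlc : IsLocallyConstant (⇑ψ)) (hψne : ψ ≠ 1)
    {X EX P M : Type*} [AddCommGroup X] [Module ℂ X] [Module.Finite ℂ X]
    [AddCommGroup EX] [Module ℂ EX] [AddCommGroup P] [Module ℂ P]
    [AddCommGroup M] [Module ℂ M]
    (τX : Representation ℂ Kˣ X) (hτX : TIsSmooth τX) (hXcyc : TCyclic τX)
    (ρE : Rep K EX) (hρE : IsSmoothRep ρE) (cE : CompSeries ρE)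
    (hEdeg : cE.deg (SRep ψ hψlc) = 1) (hEperf : Perfect ρE)
    (hEpi0 : GRep.Iso (piZeroT ρE) τX)
    (ρP : Rep K P) (hρP : IsSmoothRep ρP) (cP : CompSeries ρP)
    (ρM : Rep K M) (hρM : IsSmoothRep ρM) (cM : CompSeries ρM)
    (i : P →ₗ[ℂ] M) (hi : GRep.Equivariant ρP ρM i) (hiinj : Function.Injective i)
    (j : EX →ₗ[ℂ] M) (hj : GRep.Equivariant ρE ρM j) (hjinj : Function.Injective j) :
    (Function.Injective ((LinearMap.range i).mkQ.comp j) ∧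
      Function.Injective ((LinearMap.range j).mkQ.comp i)) ∨
    (∃ (ψm : X →ₗ[ℂ] ↥(sInv (GRep.quot ρM (LinearMap.range i)
          (GRep.range_invariant ρP ρM i hi))))
       (hψm : GRep.Equivariant τX
          (sInvT (GRep.quot ρM (LinearMap.range i) (GRep.range_invariant ρP ρM i hi))) ψm),
      ∃ (EY : Submodule ℂ (Kˣ → ℂ)) (hEY : GRep.Invariant (repCx K ψ) EY),
        EY ≤ Cb K ∧
        (∃ cY : CompSeries (GRep.sub (repCx K ψ) hEY), cY.deg (SRep ψ hψlc) = 1) ∧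
        GRep.Iso (piZeroT (GRep.sub (repCx K ψ) hEY))
          (GRep.sub τX (GRep.ker_invariant τX
            (sInvT (GRep.quot ρM (LinearMap.range i) (GRep.range_invariant ρP ρM i hi)))
            ψm hψm)) ∧
        ∃ g : ↥EY →ₗ[ℂ] P, Function.Injective g ∧
          GRep.Equivariant (GRep.sub (repCx K ψ) hEY) ρP g) :=
  statement15_general ψ hψlc hψne τX ρE hρE cE hEdeg hEperf hEpi0 ρP ρM i hi hiinj j hj hjinj

end Statements

end PSW
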